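/- (Multilateral analogue of Bailey's ₃ψ₃ summation, δ = 1 case.) Let n be a positive integer and q, s, a, x ∈ ℂ with 0 < |q| < 1, a ≠ 0, x ≠ 0, s ≠ 0. Assume that none of s, as, x, ax, sx^{-1}, asx equals q^m for any integer m (so that all factors below are nonzero), and assume the family over μ ∈ ℤⁿ on the right-hand side is absolutely summable. Then ∏_{i=1}^{n} (1 − q^{1+2n−2i}) · [(sx^{-1})_{∞ⁿ} (asx)_{∞ⁿ} (q^{2n})_{∞ⁿ} (q^{2n}/a)_{∞ⁿ} / ((s)_{∞ⁿ} (as)_{∞ⁿ} (q^{2n}x)_{∞ⁿ} (q^{2n}/(ax))_{∞ⁿ})] = ∑_{μ ∈ ℤⁿ} q^{(1−n)|μ| + 2n(μ)} s^{|μ|} · [(q^{2n}/(as);q)_μ (x^{-1};q)_μ (ax;q)_μ / ((as;q)_μ (q^{2n}x;q)_μ (q^{2n}/(ax);q)_μ)] · ∏_{1 ≤ i < j ≤ n} [(1 − q^{j−i+μ_i−μ_j})(1 − q^{1+2n−i−j+μ_i+μ_j}) / ((1 − q^{j−i})² (1 − q^{1+2n−i−j})²)]. -/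

import Mathlib

/-- The finite q-Pochhammer symbol `(a;q)_k = ∏_{i=0}^{k-1} (1 - a qⁱ)`. -/
noncomputable def qPoch (a q : ℂ) (k : ℕ) : ℂ :=
  ∏ i ∈ Finset.range k, (1 - a * q ^ i)

/-- The infinite q-Pochhammer symbol `(a;q)_∞ = ∏_{i=0}^{∞} (1 - a qⁱ)`. -/
noncomputable def qPochInf (a q : ℂ) : ℂ :=
  ∏' i : ℕ, (1 - a * q ^ i)

/-- The q-Pochhammer symbol extended to an arbitrary integer index:
`(a;q)_k = (a;q)_∞ / (a q^k;q)_∞`. -/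
noncomputable def qPochInt (a q : ℂ) (k : ℤ) : ℂ :=
  qPochInf a q / qPochInf (a * q ^ k) q

/-- The `t = q` specialization of the partition q-Pochhammer symbol, extended to
integer vectors: `(a;q)_μ = ∏_{i=1}^{n} (a q^{1-i};q)_{μ_i}`. -/
noncomputable def qPochIntVec (n : ℕ) (a q : ℂ) (μ : Fin n → ℤ) : ℂ :=
  ∏ i : Fin n, qPochInt (a * q ^ (-((i : ℕ) : ℤ))) q (μ i)

/-- The multiple infinite q-Pochhammer symbol `(a)_{∞ⁿ} = ∏_{i=1}^{n} (a q^{1-i};q)_∞`. -/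
noncomputable def qPochInfVec (n : ℕ) (a q : ℂ) : ℂ :=
  ∏ i : Fin n, qPochInf (a * q ^ (-((i : ℕ) : ℤ))) q

/-!
The substitution `ν_i = μ_{n-1-i} + i` turns the summand into a product of one-dimensional
bilateral well-poised terms in the `ν_i` times the Vandermonde product of the symmetric variables
`q ^ (-ν_i) + q ^ (ν_i + 1)`. By Andréief's identity the multiple sum is then a determinant of
bilateral sums. The reflection `ν ↦ -1 - ν` fixes the symmetric variable and folds each bilateral
sum into a unilateral one; after row and column operations passing to Askey–Wilson bases, every
entry is a very-well-poised `₆φ₅` series, summed by Rogers' formula, and the remaining determinant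
of infinite products is evaluated by Krattenthaler's lemma. All of this needs `|s| < |q| ^ (n - 1)`,
which absolute summability forces: along `ν = (0, …, n - 2, N)` the summand behaves like a nonzero
constant times `(s / q ^ (n - 1)) ^ N`.
-/

open Filter Topology

section QPochhammer

variable {q : ℂ}

lemma qPoch_zero (a q : ℂ) : qPoch a q 0 = 1 := by simp [qPoch]

lemma qPoch_succ (a q : ℂ) (k : ℕ) : qPoch a q (k + 1) = qPoch a q k * (1 - a * q ^ k) :=
  Finset.prod_range_succ _ _

lemma tendsto_pow_zero (hq1 : ‖q‖ < 1) : Tendsto (fun k : ℕ => q ^ k) atTop (𝓝 0) :=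
  tendsto_pow_atTop_nhds_zero_of_norm_lt_one hq1

lemma one_sub_pow_ne_zero (hq1 : ‖q‖ < 1) {k : ℕ} (hk : k ≠ 0) : 1 - q ^ k ≠ 0 := by
  refine sub_ne_zero.2 fun h => ?_
  have := pow_lt_one₀ (norm_nonneg q) hq1 hk
  rw [← norm_pow, ← h, norm_one] at this
  exact lt_irrefl _ this

lemma summable_norm_mul_pow (hq1 : ‖q‖ < 1) (a : ℂ) : Summable fun i : ℕ => ‖-(a * q ^ i)‖ := by
  simp only [norm_neg, norm_mul, norm_pow]
  exact (summable_geometric_of_lt_one (norm_nonneg _) hq1).mul_left _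

lemma multipliable_one_sub_mul_pow (hq1 : ‖q‖ < 1) (a : ℂ) :
    Multipliable fun i : ℕ => 1 - a * q ^ i := by
  simpa [sub_eq_add_neg] using multipliable_one_add_of_summable (summable_norm_mul_pow hq1 a)

lemma tendsto_qPoch (hq1 : ‖q‖ < 1) (a : ℂ) : Tendsto (qPoch a q) atTop (𝓝 (qPochInf a q)) :=
  (multipliable_one_sub_mul_pow hq1 a).tendsto_prod_tprod_nat

lemma qPochInf_ne_zero (hq1 : ‖q‖ < 1) {a : ℂ} (h : ∀ i : ℕ, a * q ^ i ≠ 1) :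
    qPochInf a q ≠ 0 := by
  simpa [qPochInf, sub_eq_add_neg] using
    tprod_one_add_ne_zero_of_summable (f := fun i : ℕ => -(a * q ^ i))
      (fun i hi => h i (by linear_combination -hi)) (summable_norm_mul_pow hq1 a)

lemma qPochInf_eq_one_sub_mul (hq1 : ‖q‖ < 1) (a : ℂ) :
    qPochInf a q = (1 - a) * qPochInf (a * q) q := by
  have hshift (i : ℕ) : 1 - a * q * q ^ i = 1 - a * q ^ (i + 1) := by ring
  have hsucc : Multipliable fun i : ℕ => 1 - a * q ^ (i + 1) :=
    (multipliable_one_sub_mul_pow hq1 (a * q)).congr hshift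
  unfold qPochInf
  rw [tprod_eq_zero_mul' (f := fun i : ℕ => 1 - a * q ^ i) hsucc, pow_zero, mul_one]
  simp only [hshift]

lemma qPochInf_eq_qPoch_mul (hq1 : ‖q‖ < 1) (a : ℂ) (k : ℕ) :
    qPochInf a q = qPoch a q k * qPochInf (a * q ^ k) q := by
  induction k with
  | zero => simp [qPoch_zero]
  | succ k ih =>
    rw [qPoch_succ, ih, qPochInf_eq_one_sub_mul hq1 (a * q ^ k), pow_succ]
    ring_nf

end QPochhammer

section WellPoised

/-- The ratio of consecutive terms of the well-poised series `wellPoisedTerm`, as a function of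
`w = q ^ k`. -/
noncomputable def wellPoisedRatio (q a b c z w : ℂ) : ℂ :=
  (1 - a * w) * (1 - b * w) * (1 - c * w) /
    ((1 - q * w) * (1 - a * q * w / b) * (1 - a * q * w / c)) * (a * q / (b * c)) *
    ((z - w) / (1 - a * q * z * w))

/-- The term `(a, b, c, d; q)_k / (q, aq/b, aq/c, aq/d; q)_k * (aq / (bcd)) ^ k` of a well-poised
series, written in terms of `z = 1 / d` so that the confluent limit `d → ∞` is the value at
`z = 0`. -/
noncomputable def wellPoisedTerm (q a b c z : ℂ) (k : ℕ) : ℂ :=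
  ∏ i ∈ Finset.range k, wellPoisedRatio q a b c z (q ^ i)

/-- The very-well-poised `₆φ₅` series with parameters `a, b, c` and `1 / z`, multiplied by
`1 - a`. -/
noncomputable def veryWellPoisedSum (q a b c z : ℂ) : ℂ :=
  ∑' k, wellPoisedTerm q a b c z k * (1 - a * (q ^ k) ^ 2)

variable {q a b c z : ℂ}

lemma wellPoisedTerm_zero : wellPoisedTerm q a b c z 0 = 1 := by simp [wellPoisedTerm]

lemma wellPoisedTerm_succ (k : ℕ) : wellPoisedTerm q a b c z (k + 1) =
    wellPoisedTerm q a b c z k * wellPoisedRatio q a b c z (q ^ k) :=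
  Finset.prod_range_succ _ _

lemma wellPoisedTerm_mul_left_succ (hz : ∀ k : ℕ, 1 - a * q * z * q ^ k ≠ 0) (k : ℕ) :
    wellPoisedTerm q a b c (q * z) (k + 1) = wellPoisedTerm q a b c z k *
      ((1 - a * q ^ k) * (1 - b * q ^ k) * (1 - c * q ^ k) /
        ((1 - q * q ^ k) * (1 - a * q * q ^ k / b) * (1 - a * q * q ^ k / c)) * (a * q / (b * c)) *
        (q ^ k * (q * z - 1) * (1 - a * q * z) /
          ((1 - a * q * z * q ^ k) * (1 - a * q * z * q ^ (k + 1))))) := by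
  induction k with
  | zero =>
    have h0 : 1 - a * q * z ≠ 0 := by simpa using hz 0
    simp only [wellPoisedTerm_succ, wellPoisedTerm_zero, wellPoisedRatio, pow_zero, zero_add,
      pow_one, mul_one, one_mul]
    rw [mul_comm (q * z - 1), mul_div_mul_left _ _ h0]
    ring_nf
  | succ k ih =>
    rw [wellPoisedTerm_succ, ih, wellPoisedTerm_succ (z := z)]
    simp only [wellPoisedRatio]
    have hcancel : q ^ k * (q * z - 1) * (1 - a * q * z) /
        ((1 - a * q * z * q ^ k) * (1 - a * q * z * q ^ (k + 1))) *
        ((q * z - q ^ (k + 1)) / (1 - a * q * (q * z) * q ^ (k + 1))) =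
        (z - q ^ k) / (1 - a * q * z * q ^ k) * (q ^ (k + 1) * (q * z - 1) * (1 - a * q * z) /
        ((1 - a * q * z * q ^ (k + 1)) * (1 - a * q * z * q ^ (k + 2)))) := by
      have h3 : 1 - a * q * (q * z) * q ^ (k + 1) = 1 - a * q * z * q ^ (k + 2) := by ring
      rw [h3]
      field_simp [hz k, hz (k + 1), hz (k + 2)]
      ring
    linear_combination (wellPoisedTerm q a b c z k *
      ((1 - a * q ^ k) * (1 - b * q ^ k) * (1 - c * q ^ k) /
        ((1 - q * q ^ k) * (1 - a * q * q ^ k / b) * (1 - a * q * q ^ k / c)) * (a * q / (b * c))) *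
      ((1 - a * q ^ (k + 1)) * (1 - b * q ^ (k + 1)) * (1 - c * q ^ (k + 1)) /
        ((1 - q * q ^ (k + 1)) * (1 - a * q * q ^ (k + 1) / b) * (1 - a * q * q ^ (k + 1) / c)) *
        (a * q / (b * c)))) * hcancel

lemma wellPoised_contiguous_identity (hb0 : b ≠ 0) (hc0 : c ≠ 0) (w : ℂ) :
    (1 - a * q / (b * c) * z) * (z - w) * (1 - a * q * z * (w * q)) *
        (1 - a * (w * q) ^ 2) -
      (1 - a * q * z / b) * (1 - a * q * z / c) * (w * (q * z - 1)) * (1 - a * (w * q) ^ 2) +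
      (z - w) * ((1 - a * (w * q)) * (1 - b * (w * q)) * (1 - c * (w * q))) *
        (a * q / (b * c) * z) =
      z * (1 - q * w) * (1 - a * q * w / b) * (1 - a * q * w / c) *
        (1 - a * q * z * (w * q)) := by
  field_simp
  ring

lemma sum_wellPoisedTerm_sub_eq (hq1 : ‖q‖ < 1) (hb0 : b ≠ 0) (hc0 : c ≠ 0)
    (hb : ∀ k : ℕ, a * q * q ^ k ≠ b) (hc : ∀ k : ℕ, a * q * q ^ k ≠ c)
    (hz : ∀ k : ℕ, 1 - a * q * z * q ^ k ≠ 0) (K : ℕ) :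
    ∑ k ∈ Finset.range (K + 1),
      ((1 - a * q * z) * (1 - a * q * z / (b * c)) *
          (wellPoisedTerm q a b c z k * (1 - a * (q ^ k) ^ 2)) -
        (1 - a * q * z / b) * (1 - a * q * z / c) *
          (wellPoisedTerm q a b c (q * z) k * (1 - a * (q ^ k) ^ 2))) =
      -(wellPoisedTerm q a b c z K * ((1 - a * q ^ K) * (1 - b * q ^ K) * (1 - c * q ^ K) *
        (a * q * z / (b * c)) * (1 - a * q * z) / (1 - a * q * z * q ^ K))) := by
  induction K with
  | zero =>
    have h0 := hz 0
    simp only [zero_add, Finset.sum_range_one, wellPoisedTerm_zero, pow_zero, mul_one] at h0 ⊢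
    field_simp
    ring
  | succ k ih =>
    have h0 := hz k
    have h1 := hz (k + 1)
    have h2 : 1 - q * q ^ k ≠ 0 := by simpa [pow_succ'] using one_sub_pow_ne_zero hq1 k.succ_ne_zero
    have hb := hb k
    have hc := hc k
    rw [Finset.sum_range_succ, ih, wellPoisedTerm_mul_left_succ hz, wellPoisedTerm_succ,
      wellPoisedRatio]
    rw [pow_succ q k] at *
    generalize q ^ k = w at *
    generalize wellPoisedTerm q a b c z k = t at *
    have h3 : 1 - a * q * w / b ≠ 0 := by rwa [sub_ne_zero, ne_comm, Ne, div_eq_one_iff_eq hb0]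
    have h4 : 1 - a * q * w / c ≠ 0 := by rwa [sub_ne_zero, ne_comm, Ne, div_eq_one_iff_eq hc0]
    have hcore := wellPoised_contiguous_identity (q := q) (a := a) (z := z) hb0 hc0 w
    have h5 : a * q * z / (b * c) = a * q / (b * c) * z := by ring
    rw [h5]
    generalize a * q / (b * c) = e at *
    generalize 1 - a * q * w / b = x at *
    generalize 1 - a * q * w / c = y at *
    generalize 1 - a * q * z / b = x' at *
    generalize 1 - a * q * z / c = y' at *
    generalize (1 - a * w) * (1 - b * w) * (1 - c * w) = n at *
    generalize (1 - a * (w * q)) * (1 - b * (w * q)) * (1 - c * (w * q)) = n' at *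
    generalize 1 - q * w = p at *
    generalize 1 - a * q * z * w = u at *
    generalize 1 - a * q * z * (w * q) = v at *
    field_simp
    linear_combination (t * n * e * (1 - a * q * z)) * hcore

lemma summable_mul_of_tendsto {f g : ℕ → ℂ} {l : ℂ} (hf : Summable f)
    (hg : Tendsto g atTop (𝓝 l)) : Summable fun k => f k * g k :=
  Summable.mul_tendsto_const hf.norm (by rwa [Nat.cofinite_eq_atTop])

lemma summable_of_tendsto_norm_ratio {f r : ℕ → ℂ} {l : ℝ} (hf : ∀ k, f (k + 1) = f k * r k)
    (hr : Tendsto (fun k => ‖r k‖) atTop (𝓝 l)) (hl : l < 1) : Summable f := by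
  obtain ⟨ρ, hlρ, hρ1⟩ := exists_between hl
  refine summable_of_ratio_norm_eventually_le hρ1 ?_
  filter_upwards [hr.eventually (gt_mem_nhds hlρ)] with k hk
  rw [hf, norm_mul, mul_comm]
  gcongr

lemma tendsto_comp_pow (hq1 : ‖q‖ < 1) {f : ℂ → ℂ} (hf : ContinuousAt f 0) :
    Tendsto (fun k : ℕ => f (q ^ k)) atTop (𝓝 (f 0)) :=
  hf.tendsto.comp (tendsto_pow_zero hq1)

lemma summable_wellPoisedTerm_mul_pow (hq1 : ‖q‖ < 1) {γ : ℂ}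
    (h : ‖a * q * z / (b * c) * γ‖ < 1) :
    Summable fun k => wellPoisedTerm q a b c z k * γ ^ k := by
  refine summable_of_tendsto_norm_ratio (r := fun k => wellPoisedRatio q a b c z (q ^ k) * γ)
    (fun k => by rw [wellPoisedTerm_succ]; ring) ?_ h
  have hcont : ContinuousAt (fun w => wellPoisedRatio q a b c z w * γ) 0 := by
    unfold wellPoisedRatio
    fun_prop (disch := simp)
  have hzero : wellPoisedRatio q a b c z 0 * γ = a * q * z / (b * c) * γ := by
    simp only [wellPoisedRatio, mul_zero, zero_div, sub_zero, mul_one, div_one, one_mul]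
    ring
  exact hzero ▸ (tendsto_comp_pow hq1 hcont).norm

lemma summable_wellPoisedTerm_mul_left (hq1 : ‖q‖ < 1) (hz : ∀ k : ℕ, 1 - a * q * z * q ^ k ≠ 0)
    (hs : Summable (wellPoisedTerm q a b c z)) : Summable (wellPoisedTerm q a b c (q * z)) := by
  refine (summable_nat_add_iff 1).1 ?_
  simp only [wellPoisedTerm_mul_left_succ hz, pow_succ]
  refine summable_mul_of_tendsto hs (tendsto_comp_pow hq1
    (f := fun w => (1 - a * w) * (1 - b * w) * (1 - c * w) /
        ((1 - q * w) * (1 - a * q * w / b) * (1 - a * q * w / c)) * (a * q / (b * c)) *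
        (w * (q * z - 1) * (1 - a * q * z) /
          ((1 - a * q * z * w) * (1 - a * q * z * (w * q))))) ?_)
  fun_prop (disch := simp)

lemma summable_wellPoisedTerm_pow_mul (hq1 : ‖q‖ < 1) (hz : ∀ k : ℕ, 1 - a * q * z * q ^ k ≠ 0)
    (hs : Summable (wellPoisedTerm q a b c z)) (N : ℕ) :
    Summable (wellPoisedTerm q a b c (q ^ N * z)) := by
  induction N with
  | zero => simpa using hs
  | succ N ih =>
    rw [pow_succ', mul_assoc]
    refine summable_wellPoisedTerm_mul_left hq1 (fun k => ?_) ih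
    convert hz (N + k) using 2
    ring

lemma summable_wellPoisedTerm_mul_quadratic (hq1 : ‖q‖ < 1)
    (hs : Summable (wellPoisedTerm q a b c z)) :
    Summable fun k => wellPoisedTerm q a b c z k * (1 - a * (q ^ k) ^ 2) :=
  summable_mul_of_tendsto hs (tendsto_comp_pow hq1 (f := fun w => 1 - a * w ^ 2) (by fun_prop))

lemma veryWellPoisedSum_eq_mul_left (hq1 : ‖q‖ < 1) (hb0 : b ≠ 0) (hc0 : c ≠ 0)
    (hb : ∀ k : ℕ, a * q * q ^ k ≠ b) (hc : ∀ k : ℕ, a * q * q ^ k ≠ c)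
    (hz : ∀ k : ℕ, 1 - a * q * z * q ^ k ≠ 0) (hs : Summable (wellPoisedTerm q a b c z)) :
    (1 - a * q * z) * (1 - a * q * z / (b * c)) * veryWellPoisedSum q a b c z =
      (1 - a * q * z / b) * (1 - a * q * z / c) * veryWellPoisedSum q a b c (q * z) := by
  have hsum := (summable_wellPoisedTerm_mul_quadratic hq1 hs).mul_left
    ((1 - a * q * z) * (1 - a * q * z / (b * c)))
  have hsum' := (summable_wellPoisedTerm_mul_quadratic hq1
    (summable_wellPoisedTerm_mul_left hq1 hz hs)).mul_left
      ((1 - a * q * z / b) * (1 - a * q * z / c))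
  have hpartial := ((hsum.sub hsum').hasSum.tendsto_sum_nat).comp (tendsto_add_atTop_nat 1)
  simp only [Function.comp_def, sum_wellPoisedTerm_sub_eq hq1 hb0 hc0 hb hc hz] at hpartial
  rw [hsum.tsum_sub hsum', tsum_mul_left, tsum_mul_left] at hpartial
  have hzero := hs.tendsto_atTop_zero.mul (tendsto_comp_pow hq1
    (f := fun w => (1 - a * w) * (1 - b * w) * (1 - c * w) *
      (a * q * z / (b * c)) * (1 - a * q * z) / (1 - a * q * z * w)) (by fun_prop (disch := simp)))
  rw [zero_mul] at hzero
  exact sub_eq_zero.1 (tendsto_nhds_unique hpartial (by simpa using hzero.neg))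

lemma qPoch_mul_veryWellPoisedSum (hq1 : ‖q‖ < 1) (hb0 : b ≠ 0) (hc0 : c ≠ 0)
    (hb : ∀ k : ℕ, a * q * q ^ k ≠ b) (hc : ∀ k : ℕ, a * q * q ^ k ≠ c)
    (hz : ∀ k : ℕ, 1 - a * q * z * q ^ k ≠ 0) (hs : Summable (wellPoisedTerm q a b c z)) (N : ℕ) :
    qPoch (a * q * z) q N * qPoch (a * q * z / (b * c)) q N * veryWellPoisedSum q a b c z =
      qPoch (a * q * z / b) q N * qPoch (a * q * z / c) q N *
        veryWellPoisedSum q a b c (q ^ N * z) := by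
  induction N with
  | zero => simp [qPoch_zero]
  | succ N ih =>
    have hz' (k : ℕ) : 1 - a * q * (q ^ N * z) * q ^ k ≠ 0 := by
      convert hz (N + k) using 2
      ring
    have hstep := veryWellPoisedSum_eq_mul_left hq1 hb0 hc0 hb hc hz'
      (summable_wellPoisedTerm_pow_mul hq1 hz hs N)
    rw [← mul_assoc q, ← pow_succ'] at hstep
    simp only [qPoch_succ]
    linear_combination (1 - a * q * z * q ^ N) * (1 - a * q * z / (b * c) * q ^ N) * ih +
      qPoch (a * q * z / b) q N * qPoch (a * q * z / c) q N * hstep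

lemma exists_summable_bound_wellPoisedTerm (hq1 : ‖q‖ < 1) :
    ∃ B : ℕ → ℝ, Summable B ∧ ∀ᶠ z in 𝓝 0, ∀ k, ‖wellPoisedTerm q a b c z k‖ ≤ B k := by
  have hjoint : ContinuousAt (fun p : ℂ × ℂ => wellPoisedRatio q a b c p.1 p.2) (0, 0) := by
    unfold wellPoisedRatio
    fun_prop (disch := simp)
  have hsmall : ∀ᶠ p : ℂ × ℂ in 𝓝 0 ×ˢ 𝓝 0, ‖wellPoisedRatio q a b c p.1 p.2‖ < 1 / 2 := by
    rw [← nhds_prod_eq]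
    refine hjoint.norm.eventually (gt_mem_nhds ?_)
    simp [wellPoisedRatio]
  obtain ⟨P, hP, Q, hQ, hPQ⟩ := eventually_prod_iff.1 hsmall
  obtain ⟨K, hK⟩ := eventually_atTop.1 ((tendsto_pow_zero hq1).eventually hQ)
  have hinit : ∀ᶠ z in 𝓝 0, ∀ i ∈ Finset.range K,
      ‖wellPoisedRatio q a b c z (q ^ i)‖ < ‖wellPoisedRatio q a b c 0 (q ^ i)‖ + 1 := by
    refine (eventually_all_finset _).2 fun i _ => ?_
    have hcont : ContinuousAt (fun z => wellPoisedRatio q a b c z (q ^ i)) 0 := by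
      unfold wellPoisedRatio
      fun_prop (disch := simp)
    exact hcont.norm.eventually (gt_mem_nhds (lt_add_one _))
  let β (i : ℕ) : ℝ := if i < K then ‖wellPoisedRatio q a b c 0 (q ^ i)‖ + 1 else 1 / 2
  refine ⟨fun k => ∏ i ∈ Finset.range k, β i, ?_, ?_⟩
  · refine summable_of_ratio_norm_eventually_le (r := 1 / 2) (by norm_num) ?_
    filter_upwards [eventually_ge_atTop K] with k hk
    rw [Finset.prod_range_succ, norm_mul, mul_comm]
    simp [β, hk.not_gt]
  · filter_upwards [hP, hinit] with z hzP hzinit k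
    rw [wellPoisedTerm, norm_prod]
    refine Finset.prod_le_prod (fun _ _ => norm_nonneg _) fun i _ => ?_
    by_cases hi : i < K
    · simpa [β, hi] using (hzinit i (Finset.mem_range.2 hi)).le
    · simpa [β, hi] using (hPQ hzP (hK i (not_lt.1 hi))).le

lemma continuousAt_veryWellPoisedSum (hq1 : ‖q‖ < 1) :
    ContinuousAt (veryWellPoisedSum q a b c) 0 := by
  obtain ⟨B, hB, hbound⟩ := exists_summable_bound_wellPoisedTerm (a := a) (b := b) (c := c) hq1
  refine tendsto_tsum_of_dominated_convergence (bound := fun k => B k * (1 + ‖a‖))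
    (hB.mul_right _) (fun k => ?_) ?_
  · have hcont : ContinuousAt
        (fun z => wellPoisedTerm q a b c z k * (1 - a * (q ^ k) ^ 2)) 0 := by
      unfold wellPoisedTerm wellPoisedRatio
      fun_prop (disch := simp)
    exact hcont
  · filter_upwards [hbound] with z hz k
    have hquad : ‖1 - a * (q ^ k) ^ 2‖ ≤ 1 + ‖a‖ := by
      refine (norm_sub_le _ _).trans ?_
      rw [norm_one, norm_mul, norm_pow, norm_pow]
      gcongr
      exact mul_le_of_le_one_right (norm_nonneg _)
        (pow_le_one₀ (by positivity) (pow_le_one₀ (norm_nonneg _) hq1.le))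
    rw [norm_mul]
    gcongr
    exacts [(norm_nonneg _).trans (hz k), hz k]

lemma wellPoisedTerm_one_succ (k : ℕ) : wellPoisedTerm q a b c 1 (k + 1) = 0 :=
  Finset.prod_eq_zero (Finset.mem_range.2 k.succ_pos) (by simp [wellPoisedRatio])

lemma veryWellPoisedSum_one : veryWellPoisedSum q a b c 1 = 1 - a := by
  rw [veryWellPoisedSum, tsum_eq_single 0]
  · simp [wellPoisedTerm_zero]
  · rintro (_ | k) hk
    exacts [absurd rfl hk, by rw [wellPoisedTerm_one_succ, zero_mul]]

lemma qPochInf_mul_veryWellPoisedSum (hq1 : ‖q‖ < 1) (hb0 : b ≠ 0) (hc0 : c ≠ 0)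
    (hb : ∀ k : ℕ, a * q * q ^ k ≠ b) (hc : ∀ k : ℕ, a * q * q ^ k ≠ c)
    (hz : ∀ k : ℕ, 1 - a * q * z * q ^ k ≠ 0) (hs : Summable (wellPoisedTerm q a b c z)) :
    qPochInf (a * q * z) q * qPochInf (a * q * z / (b * c)) q * veryWellPoisedSum q a b c z =
      qPochInf (a * q * z / b) q * qPochInf (a * q * z / c) q * veryWellPoisedSum q a b c 0 := by
  have hlim : Tendsto (fun N : ℕ => veryWellPoisedSum q a b c (q ^ N * z)) atTop
      (𝓝 (veryWellPoisedSum q a b c 0)) :=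
    (continuousAt_veryWellPoisedSum hq1).tendsto.comp
      (by simpa using (tendsto_pow_zero hq1).mul_const z)
  refine tendsto_nhds_unique
    (((tendsto_qPoch hq1 _).mul (tendsto_qPoch hq1 _)).mul tendsto_const_nhds) ?_
  simp only [qPoch_mul_veryWellPoisedSum hq1 hb0 hc0 hb hc hz hs]
  exact ((tendsto_qPoch hq1 _).mul (tendsto_qPoch hq1 _)).mul hlim

/-- Rogers' nonterminating `₆φ₅` summation. The shifts `z ↦ q z` relate the series to its value at
`z = 0`, which is then read off from the trivial case `z = 1`. -/
theorem rogers_six_phi_five (hq1 : ‖q‖ < 1) (hb0 : b ≠ 0) (hc0 : c ≠ 0)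
    (ha : ∀ k : ℕ, a * q * q ^ k ≠ 1) (hb : ∀ k : ℕ, a * q * q ^ k ≠ b)
    (hc : ∀ k : ℕ, a * q * q ^ k ≠ c) (hz : ∀ k : ℕ, a * q * z * q ^ k ≠ 1)
    (h : ‖a * q * z / (b * c)‖ < 1) :
    veryWellPoisedSum q a b c z =
      qPochInf a q * qPochInf (a * q / (b * c)) q * qPochInf (a * q * z / b) q *
          qPochInf (a * q * z / c) q /
        (qPochInf (a * q / b) q * qPochInf (a * q / c) q * qPochInf (a * q * z) q *
          qPochInf (a * q * z / (b * c)) q) := by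
  have hz_sum : Summable (wellPoisedTerm q a b c z) := by
    simpa using summable_wellPoisedTerm_mul_pow (γ := 1) hq1 (by simpa using h)
  have hone_sum : Summable (wellPoisedTerm q a b c 1) :=
    (summable_nat_add_iff 1).1 (by simpa only [wellPoisedTerm_one_succ] using summable_zero)
  have hz_chain := qPochInf_mul_veryWellPoisedSum hq1 hb0 hc0 hb hc
    (fun k => sub_ne_zero.2 (hz k).symm) hz_sum
  have hone_chain := qPochInf_mul_veryWellPoisedSum hq1 hb0 hc0 hb hc
    (fun k => by simpa using sub_ne_zero.2 (ha k).symm) hone_sum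
  rw [veryWellPoisedSum_one, mul_one, mul_right_comm, mul_comm _ (1 - a),
    ← qPochInf_eq_one_sub_mul hq1] at hone_chain
  have hB : qPochInf (a * q / b) q ≠ 0 := qPochInf_ne_zero hq1 fun k => by
    rw [div_mul_eq_mul_div, Ne, div_eq_one_iff_eq hb0]; exact hb k
  have hC : qPochInf (a * q / c) q ≠ 0 := qPochInf_ne_zero hq1 fun k => by
    rw [div_mul_eq_mul_div, Ne, div_eq_one_iff_eq hc0]; exact hc k
  have hZ : qPochInf (a * q * z) q ≠ 0 := qPochInf_ne_zero hq1 hz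
  have hBC : qPochInf (a * q * z / (b * c)) q ≠ 0 := qPochInf_ne_zero hq1 fun k hk => by
    have : ‖a * q * z / (b * c) * q ^ k‖ < 1 := by
      rw [norm_mul, norm_pow]
      exact mul_lt_one_of_nonneg_of_lt_one_left (norm_nonneg _) h
        (pow_le_one₀ (norm_nonneg _) hq1.le)
    rw [hk, norm_one] at this
    exact lt_irrefl _ this
  rw [eq_div_iff (by positivity)]
  linear_combination (qPochInf (a * q / b) q * qPochInf (a * q / c) q) * hz_chain -
    (qPochInf (a * q * z / b) q * qPochInf (a * q * z / c) q) * hone_chain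

end WellPoised

section Determinants

open Polynomial

variable {R : Type*} [CommRing R]

/-- The polynomial `∏_{k < j} (1 - a_k X) ∏_{j ≤ k < m} (1 - b_k X)`, which interpolates between
the two families of linear factors in Krattenthaler's determinant. -/
noncomputable def krattenthalerPoly (a b : ℕ → R) (m j : ℕ) : R[X] :=
  (∏ k ∈ Finset.range j, (1 - C (a k) * X)) * ∏ k ∈ Finset.Ico j m, (1 - C (b k) * X)

lemma krattenthalerPoly_succ_succ (a b : ℕ → R) {m j : ℕ} (hj : j < m + 1) :
    krattenthalerPoly a b (m + 1) (j + 1) =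
      C (b j - a j) * (krattenthalerPoly a (fun k => b (k + 1)) m j * X) +
        krattenthalerPoly a b (m + 1) j := by
  unfold krattenthalerPoly
  rw [Finset.prod_range_succ, Finset.prod_eq_prod_Ico_succ_bot hj,
    ← Finset.prod_Ico_add' (fun k => 1 - C (b k) * X) j m 1, C_sub]
  ring

lemma coeff_zero_krattenthalerPoly (a b : ℕ → R) (m j : ℕ) :
    (krattenthalerPoly a b m j).coeff 0 = 1 := by
  simp [coeff_zero_eq_eval_zero, krattenthalerPoly, eval_prod]

lemma eval_krattenthalerPoly (a b : ℕ → R) (m j : ℕ) (x : R) :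
    (krattenthalerPoly a b m j).eval x =
      (∏ k ∈ Finset.range j, (1 - a k * x)) * ∏ k ∈ Finset.Ico j m, (1 - b k * x) := by
  simp [krattenthalerPoly, eval_prod]

lemma natDegree_krattenthalerPoly_lt (a b : ℕ → R) {m j : ℕ} (hj : j ≤ m) :
    (krattenthalerPoly a b m j).natDegree < m + 1 := by
  have hprod (s : Finset ℕ) (c : ℕ → R) :
      (∏ k ∈ s, (1 - C (c k) * X)).natDegree ≤ s.card := by
    refine (natDegree_prod_le _ _).trans ((Finset.sum_le_card_nsmul _ _ 1 fun k _ => ?_).trans ?_)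
    · compute_degree
    · simp
  have hmul := natDegree_mul_le_of_le (hprod (Finset.range j) a) (hprod (Finset.Ico j m) b)
  rw [Finset.card_range, Nat.card_Ico] at hmul
  exact Nat.lt_succ_of_le (hmul.trans (by lia))

lemma det_coeff_krattenthalerPoly (m : ℕ) (a b : ℕ → R) :
    (Matrix.of fun i j : Fin (m + 1) => (krattenthalerPoly a b m j).coeff i).det =
      ∏ l ∈ Finset.range m, ∏ k ∈ Finset.range (l + 1), (b l - a k) := by
  induction m generalizing b with
  | zero => simp [coeff_zero_krattenthalerPoly]
  | succ m ih =>
    let b' : ℕ → R := fun k => b (k + 1)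
    let B : Matrix (Fin (m + 2)) (Fin (m + 2)) R := Matrix.of fun i j =>
      Fin.cases ((krattenthalerPoly a b (m + 1) 0).coeff i)
        (fun j' : Fin (m + 1) => (b j' - a j') * (krattenthalerPoly a b' m j' * X).coeff i) j
    have hcols : (Matrix.of fun i j : Fin (m + 2) =>
        (krattenthalerPoly a b (m + 1) j).coeff i).det = B.det := by
      refine Matrix.det_eq_of_forall_col_eq_smul_add_pred (fun _ => 1) (fun i => ?_) fun i j => ?_
      · simp [B]
      · simp only [Matrix.of_apply, B, b', Fin.cases_succ, Fin.val_succ, Fin.val_castSucc]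
        rw [krattenthalerPoly_succ_succ a b j.2, coeff_add, coeff_C_mul, one_mul]
    have hminor : B.submatrix Fin.succ (Fin.succAbove 0) = Matrix.of fun i j : Fin (m + 1) =>
        (b j - a j) *
          (Matrix.of fun i j : Fin (m + 1) => (krattenthalerPoly a b' m j).coeff i) i j := by
      ext i j
      simp [B]
    have htri : ∏ l ∈ Finset.range (m + 1), ∏ k ∈ Finset.range (l + 1), (b l - a k) =
        (∏ l ∈ Finset.range (m + 1), (b l - a l)) *
          ∏ l ∈ Finset.range m, ∏ k ∈ Finset.range (l + 1), (b' l - a k) := by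
      have hlast (l : ℕ) : ∏ k ∈ Finset.range (l + 1), (b l - a k) =
          (∏ k ∈ Finset.range l, (b l - a k)) * (b l - a l) := Finset.prod_range_succ _ _
      rw [Finset.prod_congr rfl fun l _ => hlast l, Finset.prod_mul_distrib,
        Finset.prod_range_succ' (fun l => ∏ k ∈ Finset.range l, (b l - a k)),
        Finset.prod_range_zero, mul_one, mul_comm]
    rw [hcols, Matrix.det_succ_row_zero, Fin.sum_univ_succ, Finset.sum_eq_zero, hminor,
      Matrix.det_mul_row, ih, htri, ← Fin.prod_univ_eq_prod_range (fun l => b l - a l) (m + 1)]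
    · simp [B, coeff_zero_krattenthalerPoly]
    · intro j _
      simp [B]

/-- A determinant of Krattenthaler: the matrix factors as a Vandermonde matrix times a matrix of
coefficients. -/
theorem det_prod_one_sub_mul_prod_one_sub (m : ℕ) (a b : ℕ → R) (x : Fin (m + 1) → R) :
    (Matrix.of fun i j : Fin (m + 1) => (∏ k ∈ Finset.range j, (1 - a k * x i)) *
      ∏ k ∈ Finset.Ico (j : ℕ) m, (1 - b k * x i)).det =
    (∏ i, ∏ j ∈ Finset.Ioi i, (x j - x i)) *
      ∏ l ∈ Finset.range m, ∏ k ∈ Finset.range (l + 1), (b l - a k) := by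
  rw [← det_coeff_krattenthalerPoly, ← Matrix.det_vandermonde, ← Matrix.det_mul]
  congr 1
  ext i j
  rw [Matrix.of_apply, ← eval_krattenthalerPoly,
    eval_eq_sum_range' (natDegree_krattenthalerPoly_lt a b (Nat.le_of_lt_succ j.2)),
    ← Fin.sum_univ_eq_sum_range (fun k => (krattenthalerPoly a b m j).coeff k * x i ^ k),
    Matrix.mul_apply]
  exact Finset.sum_congr rfl fun k _ => mul_comm _ _

lemma det_tsum_eval_mul_eval {κ : Type*} [TopologicalSpace R] [IsTopologicalRing R] [T2Space R]
    {n : ℕ} (w y : κ → R) (P Q : Fin n → R[X]) (hP : ∀ i, (P i).natDegree = i)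
    (hPm : ∀ i, (P i).Monic) (hQ : ∀ i, (Q i).natDegree = i) (hQm : ∀ i, (Q i).Monic)
    (hs : ∀ i j : Fin n, Summable fun k => w k * y k ^ (i + j : ℕ)) :
    (Matrix.of fun i j : Fin n => ∑' k, w k * ((P i).eval (y k) * (Q j).eval (y k))).det =
      (Matrix.of fun i j : Fin n => ∑' k, w k * y k ^ (i + j : ℕ)).det := by
  have heval (S : Fin n → R[X]) (hS : ∀ i, (S i).natDegree = i) (i : Fin n) (x : R) :
      (S i).eval x = ∑ r : Fin n, (S i).coeff r * x ^ (r : ℕ) := by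
    rw [eval_eq_sum_range' (hS i ▸ i.2),
      Fin.sum_univ_eq_sum_range (fun r => (S i).coeff r * x ^ r)]
  have hfactor : (Matrix.of fun i j : Fin n =>
        ∑' k, w k * ((P i).eval (y k) * (Q j).eval (y k))) =
      (Matrix.of fun i j : Fin n => (P j).coeff i).transpose *
        (Matrix.of fun i j : Fin n => ∑' k, w k * y k ^ (i + j : ℕ)) *
        Matrix.of fun i j : Fin n => (Q j).coeff i := by
    ext i j
    have hterm (k : κ) : w k * ((P i).eval (y k) * (Q j).eval (y k)) =
        ∑ s : Fin n, ∑ r : Fin n,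
          (P i).coeff r * (w k * y k ^ (r + s : ℕ)) * (Q j).coeff s := by
      rw [heval P hP, heval Q hQ, Finset.sum_mul_sum, Finset.sum_comm, Finset.mul_sum]
      refine Finset.sum_congr rfl fun s _ => ?_
      rw [Finset.mul_sum]
      exact Finset.sum_congr rfl fun r _ => by ring
    have hsum (r s : Fin n) :
        Summable fun k => (P i).coeff r * (w k * y k ^ (r + s : ℕ)) * (Q j).coeff s :=
      ((hs r s).mul_left _).mul_right _
    simp only [Matrix.of_apply, Matrix.mul_apply, Matrix.transpose_apply, hterm, Finset.sum_mul]
    rw [Summable.tsum_finsetSum fun s _ => summable_sum fun r _ => hsum r s]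
    refine Finset.sum_congr rfl fun s _ => ?_
    rw [Summable.tsum_finsetSum fun r _ => hsum r s]
    exact Finset.sum_congr rfl fun r _ => by
      rw [((hs r s).mul_left _).tsum_mul_right, (hs r s).tsum_mul_left]
  rw [hfactor, Matrix.det_mul, Matrix.det_mul, Matrix.det_transpose,
    Matrix.det_matrixOfPolynomials P hP hPm, Matrix.det_matrixOfPolynomials Q hQ hQm, one_mul,
    mul_one]

end Determinants

section Andreief

variable {R κ : Type*} [NormedCommRing R] {n : ℕ}

lemma summable_norm_prod_apply {f : Fin n → κ → R} (hf : ∀ i, Summable fun k => ‖f i k‖) :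
    Summable fun ν : Fin n → κ => ‖∏ i, f i (ν i)‖ := by
  induction n with
  | zero => exact Summable.of_finite
  | succ n ih =>
    rw [← (Fin.consEquiv fun _ : Fin (n + 1) => κ).summable_iff]
    refine ((hf 0).mul_norm (ih fun i => hf i.succ)).congr fun ν => ?_
    simp [Fin.prod_univ_succ, Fin.consEquiv]

lemma hasSum_prod_apply [CompleteSpace R] {f : Fin n → κ → R}
    (hf : ∀ i, Summable fun k => ‖f i k‖) :
    HasSum (fun ν : Fin n → κ => ∏ i, f i (ν i)) (∏ i, ∑' k, f i k) := by
  induction n with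
  | zero => simp [hasSum_unique]
  | succ n ih =>
    have hcons (ν : κ × (Fin n → κ)) : ∏ i, f i (Fin.consEquiv (fun _ => κ) ν i) =
        f 0 ν.1 * ∏ i : Fin n, f i.succ (ν.2 i) := by
      simp [Fin.prod_univ_succ, Fin.consEquiv]
    have htail : Summable fun ν : Fin n → κ => ‖∏ i, f i.succ (ν i)‖ :=
      summable_norm_prod_apply fun i => hf i.succ
    have hmul : Summable fun ν : κ × (Fin n → κ) => f 0 ν.1 * ∏ i : Fin n, f i.succ (ν.2 i) :=
      ((hf 0).mul_norm htail).of_norm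
    have hprod := (hf 0).of_norm.hasSum.mul (ih fun i => hf i.succ) hmul
    rw [← (Fin.consEquiv fun _ : Fin (n + 1) => κ).hasSum_iff, Fin.prod_univ_succ]
    exact hprod.congr_fun hcons

/-- Andréief's identity for a discrete measure: expand the Vandermonde product as a determinant
and sum each of its terms over the product set. -/
theorem hasSum_prod_mul_vandermonde [CompleteSpace R] (f : Fin n → κ → R) (y : κ → R)
    (P : Fin n → Polynomial R) (hP : ∀ i, (P i).natDegree = i) (hPm : ∀ i, (P i).Monic)
    (hs : ∀ i j : Fin n, Summable fun k => ‖f i k * (P j).eval (y k)‖) :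
    HasSum (fun ν : Fin n → κ =>
        (∏ i, f i (ν i)) * ∏ i, ∏ j ∈ Finset.Ioi i, (y (ν j) - y (ν i)))
      (Matrix.of fun i j : Fin n => ∑' k, f i k * (P j).eval (y k)).det := by
  have hexpand (ν : Fin n → κ) :
      (∏ i, f i (ν i)) * ∏ i, ∏ j ∈ Finset.Ioi i, (y (ν j) - y (ν i)) =
        ∑ σ : Equiv.Perm (Fin n),
          (Equiv.Perm.sign σ : R) * ∏ i, (f i (ν i) * (P (σ i)).eval (y (ν i))) := by
    rw [← Matrix.det_vandermonde fun i => y (ν i),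
      Matrix.det_eval_matrixOfPolynomials_eq_det_vandermonde (fun i => y (ν i)) P hP hPm,
      ← Matrix.det_transpose, Matrix.det_apply', Finset.mul_sum]
    refine Finset.sum_congr rfl fun σ _ => ?_
    simp only [Finset.prod_mul_distrib, Matrix.transpose_apply, Matrix.of_apply]
    ring
  simp only [hexpand]
  rw [← Matrix.det_transpose, Matrix.det_apply']
  exact hasSum_sum fun σ _ => (hasSum_prod_apply fun i => hs i (σ i)).mul_left _

end Andreief

section Nonresonant

/-- A nonzero parameter that is not an integral power of `q`, so that no factor of a bilateral
`q`-shifted factorial with this parameter vanishes. -/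
def Nonresonant (q b : ℂ) : Prop :=
  b ≠ 0 ∧ ∀ m : ℤ, b ≠ q ^ m

variable {q b : ℂ}

namespace Nonresonant

lemma inv (hb : Nonresonant q b) : Nonresonant q b⁻¹ :=
  ⟨inv_ne_zero hb.1, fun m hm => hb.2 (-m) (by rw [zpow_neg, ← hm, inv_inv])⟩

lemma mul_zpow (hb : Nonresonant q b) (hq : q ≠ 0) (k : ℤ) : Nonresonant q (b * q ^ k) := by
  refine ⟨mul_ne_zero hb.1 (zpow_ne_zero _ hq), fun m hm => hb.2 (m - k) ?_⟩
  rw [zpow_sub₀ hq, ← hm, mul_div_cancel_right₀ _ (zpow_ne_zero _ hq)]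

lemma mul_pow (hb : Nonresonant q b) (hq : q ≠ 0) (k : ℕ) : Nonresonant q (b * q ^ k) := by
  simpa using hb.mul_zpow hq k

lemma zpow_div (hb : Nonresonant q b) (hq : q ≠ 0) (k : ℤ) : Nonresonant q (q ^ k / b) := by
  simpa only [div_eq_inv_mul] using hb.inv.mul_zpow hq k

lemma pow_div (hb : Nonresonant q b) (hq : q ≠ 0) (k : ℕ) : Nonresonant q (q ^ k / b) := by
  simpa using hb.zpow_div hq k

lemma one_sub_mul_zpow_ne_zero (hb : Nonresonant q b) (hq : q ≠ 0) (m : ℤ) :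
    1 - b * q ^ m ≠ 0 := fun h =>
  (hb.mul_zpow hq m).2 0 (by simpa using (sub_eq_zero.1 h).symm)

lemma one_sub_mul_pow_ne_zero (hb : Nonresonant q b) (hq : q ≠ 0) (k : ℕ) :
    1 - b * q ^ k ≠ 0 := by
  simpa using hb.one_sub_mul_zpow_ne_zero hq k

lemma one_sub_ne_zero (hb : Nonresonant q b) : 1 - b ≠ 0 :=
  sub_ne_zero.2 fun h => hb.2 0 (by simp [← h])

lemma qPochInf_ne_zero (hb : Nonresonant q b) (hq : q ≠ 0) (hq1 : ‖q‖ < 1) :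
    qPochInf b q ≠ 0 :=
  _root_.qPochInf_ne_zero hq1 fun i h =>
    hb.one_sub_mul_pow_ne_zero hq i (sub_eq_zero.2 h.symm)

lemma qPochInt_ne_zero (hb : Nonresonant q b) (hq : q ≠ 0) (hq1 : ‖q‖ < 1) (ν : ℤ) :
    qPochInt b q ν ≠ 0 :=
  div_ne_zero (hb.qPochInf_ne_zero hq hq1) ((hb.mul_zpow hq ν).qPochInf_ne_zero hq hq1)

lemma qPochInt_add_one (hb : Nonresonant q b) (hq : q ≠ 0) (hq1 : ‖q‖ < 1) (ν : ℤ) :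
    qPochInt b q (ν + 1) = qPochInt b q ν * (1 - b * q ^ ν) := by
  have hstep := qPochInf_eq_one_sub_mul hq1 (b * q ^ ν)
  have hfactor := hb.one_sub_mul_zpow_ne_zero hq ν
  rw [qPochInt, qPochInt, hstep, zpow_add_one₀ hq, mul_assoc]
  field_simp

lemma qPochInt_add (hb : Nonresonant q b) (hq : q ≠ 0) (hq1 : ‖q‖ < 1) (k l : ℤ) :
    qPochInt b q (k + l) = qPochInt b q k * qPochInt (b * q ^ k) q l := by
  have hk := (hb.mul_zpow hq k).qPochInf_ne_zero hq hq1
  rw [qPochInt, qPochInt, qPochInt, zpow_add₀ hq, mul_assoc]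
  field_simp

lemma one_sub_mul_qPochInt_mul (hb : Nonresonant q b) (hq : q ≠ 0) (hq1 : ‖q‖ < 1) (ν : ℤ) :
    (1 - b) * qPochInt (b * q) q ν = qPochInt b q ν * (1 - b * q ^ ν) := by
  have hone : qPochInt b q 1 = 1 - b := by
    rw [qPochInt, zpow_one, qPochInf_eq_one_sub_mul hq1 b,
      mul_div_cancel_right₀ _ (by simpa using (hb.mul_pow hq 1).qPochInf_ne_zero hq hq1)]
  have hadd := hb.qPochInt_add hq hq1 1 ν
  rw [hone, zpow_one] at hadd
  rw [← hadd, add_comm, hb.qPochInt_add_one hq hq1]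

end Nonresonant

end Nonresonant

section BilateralTerm

/-- The variable `w⁻¹ + q w`, invariant under `w ↦ (q w)⁻¹`; at `w = q ^ ν` this is the reflection
`ν ↦ -1 - ν`. -/
noncomputable def symmVar (q w : ℂ) : ℂ :=
  w⁻¹ + q * w

/-- The contribution of the numerator parameter `b` to a bilateral well-poised term:
`(b; q)_ν / (q² / b; q)_ν * b ^ (-ν)`. -/
noncomputable def bilateralFactor (q b : ℂ) (ν : ℤ) : ℂ :=
  qPochInt b q ν / qPochInt (q ^ 2 / b) q ν * b ^ (-ν)

/-- The term `(b, c, d; q)_ν / (q²/b, q²/c, q²/d; q)_ν * (q² / (bcd)) ^ ν` of Bailey's bilateral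
`₃ψ₃` series. -/
noncomputable def bilateralTerm (q b c d : ℂ) (ν : ℤ) : ℂ :=
  (q ^ ν) ^ 2 * (bilateralFactor q b ν * bilateralFactor q c ν * bilateralFactor q d ν)

variable {q b c d : ℂ}

lemma symmVar_inv_mul (hq : q ≠ 0) (w : ℂ) : symmVar q (q * w)⁻¹ = symmVar q w := by
  rw [symmVar, symmVar, inv_inv, mul_inv_rev, mul_comm w⁻¹, mul_inv_cancel_left₀ hq, add_comm]

lemma symmVar_sub_symmVar_inv {w : ℂ} (hw : w ≠ 0) (hb : b ≠ 0) :
    symmVar q w - symmVar q b⁻¹ = (1 - b * w) * (1 - q / b * w) * w⁻¹ := by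
  unfold symmVar
  field_simp
  ring

lemma bilateralFactor_zero (hb : Nonresonant q b) (hq : q ≠ 0) (hq1 : ‖q‖ < 1) :
    bilateralFactor q b 0 = 1 := by
  simp [bilateralFactor, qPochInt, hb.qPochInf_ne_zero hq hq1,
    (hb.pow_div hq 2).qPochInf_ne_zero hq hq1]

lemma bilateralFactor_ne_zero (hb : Nonresonant q b) (hq : q ≠ 0) (hq1 : ‖q‖ < 1) (ν : ℤ) :
    bilateralFactor q b ν ≠ 0 :=
  mul_ne_zero (div_ne_zero (hb.qPochInt_ne_zero hq hq1 ν)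
    ((hb.pow_div hq 2).qPochInt_ne_zero hq hq1 ν)) (zpow_ne_zero _ hb.1)

lemma bilateralFactor_add_one (hb : Nonresonant q b) (hq : q ≠ 0) (hq1 : ‖q‖ < 1) (ν : ℤ) :
    bilateralFactor q b (ν + 1) =
      bilateralFactor q b ν * ((1 - b * q ^ ν) / ((1 - q ^ 2 / b * q ^ ν) * b)) := by
  rw [bilateralFactor, bilateralFactor, hb.qPochInt_add_one hq hq1,
    (hb.pow_div hq 2).qPochInt_add_one hq hq1, neg_add, zpow_add₀ hb.1, zpow_neg_one]
  simp only [div_eq_mul_inv, mul_inv]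
  ring

lemma bilateralFactor_neg_add_one (hb : Nonresonant q b) (hq : q ≠ 0) (hq1 : ‖q‖ < 1) (k : ℕ) :
    bilateralFactor q b (-(k + 1 : ℤ)) = -(q * (q ^ k) ^ 2) * bilateralFactor q b k := by
  have hb0 := hb.1
  induction k with
  | zero =>
    have hrec := bilateralFactor_add_one hb hq hq1 (-1)
    have hden : 1 - q / b ≠ 0 := by simpa using (hb.pow_div hq 1).one_sub_ne_zero
    have hratio : (1 - b * q⁻¹) / ((1 - q ^ 2 / b * q⁻¹) * b) = -q⁻¹ := by
      rw [show q ^ 2 / b * q⁻¹ = q / b by field_simp,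
        show 1 - b * q⁻¹ = -q⁻¹ * ((1 - q / b) * b) by field_simp; ring,
        mul_div_cancel_right₀ _ (mul_ne_zero hden hb0)]
    rw [neg_add_cancel, zpow_neg_one, hratio] at hrec
    simp only [CharP.cast_eq_zero, zero_add, pow_zero, one_pow, mul_one]
    rw [hrec]
    field_simp
  | succ k ih =>
    have hrec := bilateralFactor_add_one hb hq hq1 (-((k + 1 : ℕ) + 1 : ℤ))
    have hnum := hb.one_sub_mul_pow_ne_zero hq k
    have hden := (hb.pow_div hq 2).one_sub_mul_pow_ne_zero hq k
    have hw : q ^ k ≠ 0 := pow_ne_zero _ hq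
    have hpow : q ^ (-((k + 1 : ℕ) + 1 : ℤ)) = (q ^ 2 * q ^ k)⁻¹ := by
      rw [zpow_neg, ← pow_add, ← zpow_natCast]
      congr 2
      push_cast
      ring
    have hratio : (1 - b * (q ^ 2 * q ^ k)⁻¹) / ((1 - q ^ 2 / b * (q ^ 2 * q ^ k)⁻¹) * b) =
        (1 - q ^ 2 / b * q ^ k) * b / (q ^ 2 * (1 - b * q ^ k)) := by
      rw [show 1 - b * (q ^ 2 * q ^ k)⁻¹ =
          -(b / (q ^ 2 * q ^ k)) * (1 - q ^ 2 / b * q ^ k) by field_simp; ring,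
        show 1 - q ^ 2 / b * (q ^ 2 * q ^ k)⁻¹ = -(1 / (b * q ^ k)) * (1 - b * q ^ k) by
          field_simp; ring]
      field_simp
    rw [show -((k + 1 : ℕ) + 1 : ℤ) + 1 = -(k + 1 : ℤ) by push_cast; ring, ih, hpow,
      hratio] at hrec
    rw [show ((k + 1 : ℕ) : ℤ) = k + 1 from rfl] at hrec ⊢
    rw [bilateralFactor_add_one hb hq hq1 k, zpow_natCast, pow_succ q k]
    generalize 1 - q ^ 2 / b * q ^ k = u, 1 - b * q ^ k = v at *
    field_simp at hrec ⊢
    linear_combination -hrec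

lemma bilateralFactor_mul_shift (hb : Nonresonant q b) (hq : q ≠ 0) (hq1 : ‖q‖ < 1) (ν : ℤ) :
    (symmVar q 1 - symmVar q b⁻¹) * bilateralFactor q (b * q) ν =
      bilateralFactor q b ν * (symmVar q (q ^ ν) - symmVar q b⁻¹) := by
  have hb0 := hb.1
  have hw : q ^ ν ≠ 0 := zpow_ne_zero _ hq
  have hqb : Nonresonant q (q / b) := by simpa using hb.pow_div hq 1
  have hnum := hb.one_sub_mul_qPochInt_mul hq hq1 ν
  have hden := hqb.one_sub_mul_qPochInt_mul hq hq1 ν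
  have hden0 := hqb.qPochInt_ne_zero hq hq1 ν
  have hden0' := (hb.pow_div hq 2).qPochInt_ne_zero hq hq1 ν
  rw [symmVar_sub_symmVar_inv one_ne_zero hb0, symmVar_sub_symmVar_inv hw hb0]
  rw [show q / b * q = q ^ 2 / b by ring] at hden
  rw [bilateralFactor, bilateralFactor, show q ^ 2 / (b * q) = q / b by field_simp, mul_zpow,
    zpow_neg q]
  generalize q / b = u at *
  field_simp
  linear_combination (1 - u) * qPochInt (q ^ 2 / b) q ν * hnum +
    qPochInt b q ν * (1 - b * q ^ ν) * hden

lemma bilateralTerm_zero (hb : Nonresonant q b) (hc : Nonresonant q c) (hd : Nonresonant q d)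
    (hq : q ≠ 0) (hq1 : ‖q‖ < 1) : bilateralTerm q b c d 0 = 1 := by
  simp [bilateralTerm, bilateralFactor_zero, *]

lemma bilateralTerm_ne_zero (hb : Nonresonant q b) (hc : Nonresonant q c) (hd : Nonresonant q d)
    (hq : q ≠ 0) (hq1 : ‖q‖ < 1) (ν : ℤ) : bilateralTerm q b c d ν ≠ 0 := by
  simp [bilateralTerm, bilateralFactor_ne_zero, zpow_ne_zero, *]

lemma bilateralTerm_natCast (hb : Nonresonant q b) (hc : Nonresonant q c) (hd : Nonresonant q d)
    (hq : q ≠ 0) (hq1 : ‖q‖ < 1) (k : ℕ) :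
    bilateralTerm q b c d k = wellPoisedTerm q q b c d⁻¹ k := by
  induction k with
  | zero => simp [bilateralTerm_zero, wellPoisedTerm_zero, *]
  | succ k ih =>
    have hd0 := hd.1
    have hqk : 1 - q * q ^ k ≠ 0 := by
      rw [← pow_succ']
      exact one_sub_pow_ne_zero hq1 k.succ_ne_zero
    rw [wellPoisedTerm_succ, ← ih, bilateralTerm, bilateralTerm, Nat.cast_succ,
      bilateralFactor_add_one hb hq hq1, bilateralFactor_add_one hc hq hq1,
      bilateralFactor_add_one hd hq hq1, wellPoisedRatio, zpow_add_one₀ hq, zpow_natCast,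
      show q * q * d⁻¹ * q ^ k = q ^ 2 / d * q ^ k by ring,
      show q * q * q ^ k / b = q ^ 2 / b * q ^ k by ring,
      show q * q * q ^ k / c = q ^ 2 / c * q ^ k by ring,
      show d⁻¹ - q ^ k = (1 - d * q ^ k) / d by field_simp]
    rw [mul_assoc (1 - q * q ^ k), mul_assoc (1 - q * q ^ k), mul_div_mul_left _ _ hqk]
    simp only [div_eq_mul_inv, mul_inv]
    ring

lemma bilateralTerm_neg_add_one (hb : Nonresonant q b) (hc : Nonresonant q c)
    (hd : Nonresonant q d) (hq : q ≠ 0) (hq1 : ‖q‖ < 1) (k : ℕ) :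
    bilateralTerm q b c d (-(k + 1 : ℤ)) = -(q * (q ^ k) ^ 2) * bilateralTerm q b c d k := by
  have hpow : q ^ (-(k + 1 : ℤ)) = (q * q ^ k)⁻¹ := by
    rw [zpow_neg, zpow_add_one₀ hq, zpow_natCast, mul_comm]
  rw [bilateralTerm, bilateralTerm, bilateralFactor_neg_add_one hb hq hq1,
    bilateralFactor_neg_add_one hc hq hq1, bilateralFactor_neg_add_one hd hq hq1, hpow,
    zpow_natCast]
  field_simp

open Polynomial

/-- The Askey–Wilson basis `∏_{r < i} (X - (b q ^ r + q / (b q ^ r)))` of polynomials in the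
symmetric variable: multiplication of a bilateral term by it shifts `b` to `b q ^ i`. -/
noncomputable def askeyWilsonBasis (q b : ℂ) (i : ℕ) : ℂ[X] :=
  ∏ r ∈ Finset.range i, (X - C (symmVar q (b * q ^ r)⁻¹))

lemma monic_askeyWilsonBasis (i : ℕ) : (askeyWilsonBasis q b i).Monic :=
  monic_prod_of_monic _ _ fun _ _ => monic_X_sub_C _

lemma natDegree_askeyWilsonBasis (i : ℕ) : (askeyWilsonBasis q b i).natDegree = i := by
  rw [askeyWilsonBasis, natDegree_prod_of_monic _ _ fun _ _ => monic_X_sub_C _]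
  simp

lemma bilateralFactor_mul_pow (hb : Nonresonant q b) (hq : q ≠ 0) (hq1 : ‖q‖ < 1) (ν : ℤ)
    (i : ℕ) :
    (askeyWilsonBasis q b i).eval (symmVar q 1) * bilateralFactor q (b * q ^ i) ν =
      bilateralFactor q b ν * (askeyWilsonBasis q b i).eval (symmVar q (q ^ ν)) := by
  induction i with
  | zero => simp [askeyWilsonBasis]
  | succ i ih =>
    have hshift := bilateralFactor_mul_shift (hb.mul_pow hq i) hq hq1 ν
    have heval (z : ℂ) : (askeyWilsonBasis q b (i + 1)).eval z =
        (askeyWilsonBasis q b i).eval z * (z - symmVar q (b * q ^ i)⁻¹) := by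
      simp [askeyWilsonBasis, Finset.prod_range_succ]
    rw [heval, heval, pow_succ, ← mul_assoc b, mul_assoc, hshift, ← mul_assoc, ih, mul_assoc]

lemma bilateralTerm_mul_pow (hc : Nonresonant q c) (hd : Nonresonant q d)
    (hq : q ≠ 0) (hq1 : ‖q‖ < 1) (ν : ℤ) (i j : ℕ) :
    (askeyWilsonBasis q c i).eval (symmVar q 1) * (askeyWilsonBasis q d j).eval (symmVar q 1) *
        bilateralTerm q b (c * q ^ i) (d * q ^ j) ν =
      bilateralTerm q b c d ν * ((askeyWilsonBasis q c i).eval (symmVar q (q ^ ν)) *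
        (askeyWilsonBasis q d j).eval (symmVar q (q ^ ν))) := by
  have hi := bilateralFactor_mul_pow hc hq hq1 ν i
  have hj := bilateralFactor_mul_pow hd hq hq1 ν j
  unfold bilateralTerm
  linear_combination (q ^ ν) ^ 2 * bilateralFactor q b ν *
    ((askeyWilsonBasis q d j).eval (symmVar q 1) * bilateralFactor q (d * q ^ j) ν * hi +
      bilateralFactor q c ν * (askeyWilsonBasis q c i).eval (symmVar q (q ^ ν)) * hj)

lemma monic_dickson_two_and_natDegree (q : ℂ) (n : ℕ) :
    (dickson 2 q n).Monic ∧ (dickson 2 q n).natDegree = n := by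
  induction n using Nat.twoStepInduction with
  | zero =>
    have hone : dickson 2 q 0 = 1 := by rw [dickson_zero]; norm_num
    simp [hone]
  | one => simp [monic_X]
  | more n ih ih' =>
    have hmonic : (X * dickson 2 q (n + 1)).Monic := monic_X.mul ih'.1
    have hdeg : (X * dickson 2 q (n + 1)).natDegree = n + 2 := by
      rw [monic_X.natDegree_mul ih'.1, ih'.2, natDegree_X]
      ring
    have hlt : (C q * dickson 2 q n).natDegree < (X * dickson 2 q (n + 1)).natDegree := by
      have := (natDegree_C_mul_le q (dickson 2 q n)).trans ih.2.le
      lia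
    rw [dickson_add_two]
    exact ⟨hmonic.sub_of_left (degree_lt_degree hlt),
      (natDegree_sub_eq_left_of_natDegree_lt hlt).trans hdeg⟩

lemma one_sub_mul_eval_dickson_two {w : ℂ} (hw : w ≠ 0) (n : ℕ) :
    (1 - q * w ^ 2) * (dickson 2 q n).eval (symmVar q w) =
      w⁻¹ ^ n - q * w ^ 2 * (q * w) ^ n := by
  unfold symmVar
  induction n using Nat.twoStepInduction with
  | zero => norm_num
  | one =>
    simp only [dickson_one, eval_X, pow_one]
    field_simp
    ring
  | more n ih ih' =>
    have hinv : w⁻¹ * w = 1 := inv_mul_cancel₀ hw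
    rw [dickson_add_two]
    simp only [eval_sub, eval_mul, eval_X, eval_C]
    linear_combination (w⁻¹ + q * w) * ih' - q * ih +
      (q * w⁻¹ ^ n - q ^ 2 * w ^ 2 * (q * w) ^ n) * hinv

lemma exists_continuous_pow_mul_eval_symmVar (q : ℂ) (R : ℂ[X]) :
    ∃ g : ℂ → ℂ, Continuous g ∧ ∀ w ≠ 0, w ^ R.natDegree * R.eval (symmVar q w) = g w := by
  refine ⟨fun w => ∑ r ∈ Finset.range (R.natDegree + 1),
    R.coeff r * (w ^ (R.natDegree - r) * (1 + q * w ^ 2) ^ r), by fun_prop, fun w hw => ?_⟩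
  rw [eval_eq_sum_range, Finset.mul_sum]
  refine Finset.sum_congr rfl fun r hr => ?_
  have hsymm : 1 + q * w ^ 2 = w * symmVar q w := by
    unfold symmVar
    field_simp
  rw [hsymm, mul_pow, ← pow_sub_mul_pow w (Nat.le_of_lt_succ (Finset.mem_range.1 hr))]
  ring

lemma summable_wellPoisedTerm_mul_eval_symmVar {a z : ℂ} (hq : q ≠ 0) (hq1 : ‖q‖ < 1) {m : ℕ}
    (h : ‖a * q * z / (b * c) * (q ^ m)⁻¹‖ < 1) (R : ℂ[X]) {i : ℕ} (hi : i + R.natDegree ≤ m)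
    {G : ℂ → ℂ} (hG : Continuous G) :
    Summable fun k : ℕ => wellPoisedTerm q a b c z k *
      ((q ^ k)⁻¹ ^ i * R.eval (symmVar q (q ^ k)) * G (q ^ k)) := by
  obtain ⟨g, hg, hgR⟩ := exists_continuous_pow_mul_eval_symmVar q R
  obtain ⟨l, rfl⟩ := Nat.exists_eq_add_of_le hi
  have hcont : Continuous fun w : ℂ => w ^ l * g w * G w := by fun_prop
  refine (summable_mul_of_tendsto (summable_wellPoisedTerm_mul_pow hq1 h)
    (tendsto_comp_pow hq1 hcont.continuousAt)).congr fun k => ?_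
  have hw : q ^ k ≠ 0 := pow_ne_zero _ hq
  rw [← hgR _ hw, ← inv_pow, pow_right_comm, inv_pow]
  generalize q ^ k = w at *
  simp only [inv_pow, pow_add]
  field_simp

lemma hasSum_bilateralTerm_mul_eval (hb : Nonresonant q b) (hc : Nonresonant q c)
    (hd : Nonresonant q d) (hq : q ≠ 0) (hq1 : ‖q‖ < 1) {m : ℕ}
    (h : ‖q ^ 2 / (b * c * d) * (q ^ m)⁻¹‖ < 1) (R : ℂ[X]) {i : ℕ} (hi : i + R.natDegree ≤ m) :
    HasSum (fun ν : ℤ => bilateralTerm q b c d ν * (q ^ ν)⁻¹ ^ i * R.eval (symmVar q (q ^ ν)))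
      (∑' k : ℕ, wellPoisedTerm q q b c d⁻¹ k * (1 - q * (q ^ k) ^ 2) *
        ((dickson 2 q i).eval (symmVar q (q ^ k)) * R.eval (symmVar q (q ^ k)))) := by
  have hconv : ‖q * q * d⁻¹ / (b * c) * (q ^ m)⁻¹‖ < 1 := by
    rwa [show q * q * d⁻¹ / (b * c) = q ^ 2 / (b * c * d) by ring]
  have hpos := summable_wellPoisedTerm_mul_eval_symmVar hq hq1 hconv R hi
    (G := fun _ => 1) continuous_const
  have hneg := summable_wellPoisedTerm_mul_eval_symmVar hq hq1 hconv R (i := 0) (by lia)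
    (G := fun w => -(q * w ^ 2) * (q * w) ^ i) (by fun_prop)
  have hpow (k : ℕ) : q ^ (-(k + 1 : ℤ)) = (q * q ^ k)⁻¹ := by
    rw [zpow_neg, zpow_add_one₀ hq, zpow_natCast, mul_comm]
  have hfold := HasSum.of_nat_of_neg_add_one
    (f := fun ν : ℤ => bilateralTerm q b c d ν * (q ^ ν)⁻¹ ^ i * R.eval (symmVar q (q ^ ν)))
    (hpos.hasSum.congr_fun fun k => by
      rw [bilateralTerm_natCast hb hc hd hq hq1, zpow_natCast]
      ring)
    (hneg.hasSum.congr_fun fun k => by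
      rw [bilateralTerm_neg_add_one hb hc hd hq hq1, bilateralTerm_natCast hb hc hd hq hq1, hpow,
        symmVar_inv_mul hq, inv_inv]
      ring)
  rw [← hpos.tsum_add hneg] at hfold
  convert hfold using 3 with k
  linear_combination wellPoisedTerm q q b c d⁻¹ k * R.eval (symmVar q (q ^ k)) *
    one_sub_mul_eval_dickson_two (q := q) (pow_ne_zero k hq) i

lemma det_tsum_dickson_mul_askeyWilsonBasis (hb : Nonresonant q b) (hc : Nonresonant q c)
    (hd : Nonresonant q d) (hq : q ≠ 0) (hq1 : ‖q‖ < 1) {n m : ℕ} (hn : 2 * n ≤ m + 2)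
    (h : ‖q ^ 2 / (b * c * d) * (q ^ m)⁻¹‖ < 1) :
    (Matrix.of fun i j : Fin n => ∑' k : ℕ, wellPoisedTerm q q b c d⁻¹ k *
        (1 - q * (q ^ k) ^ 2) * ((dickson 2 q i).eval (symmVar q (q ^ k)) *
          (askeyWilsonBasis q d j).eval (symmVar q (q ^ k)))).det =
      (∏ i : Fin n, (askeyWilsonBasis q c i).eval (symmVar q 1)) *
        (∏ i : Fin n, (askeyWilsonBasis q d i).eval (symmVar q 1)) *
        (Matrix.of fun i j : Fin n =>
          veryWellPoisedSum q q b (c * q ^ (i : ℕ)) (d * q ^ (j : ℕ))⁻¹).det := by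
  have hconv : ‖q * q * d⁻¹ / (b * c) * (q ^ m)⁻¹‖ < 1 := by
    rwa [show q * q * d⁻¹ / (b * c) = q ^ 2 / (b * c * d) by ring]
  have hs (i j : Fin n) : Summable fun k : ℕ => wellPoisedTerm q q b c d⁻¹ k *
      (1 - q * (q ^ k) ^ 2) * symmVar q (q ^ k) ^ (i + j : ℕ) :=
    (summable_wellPoisedTerm_mul_eval_symmVar hq hq1 hconv (X ^ (i + j : ℕ)) (i := 0)
      (by rw [natDegree_X_pow]; lia) (G := fun w => 1 - q * w ^ 2) (by fun_prop)).congr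
      fun k => by simp; ring
  rw [det_tsum_eval_mul_eval _ _ (fun i : Fin n => dickson 2 q i) (fun j => askeyWilsonBasis q d j)
      (fun i => (monic_dickson_two_and_natDegree q i).2)
      (fun i => (monic_dickson_two_and_natDegree q i).1)
      (fun j => natDegree_askeyWilsonBasis j) (fun j => monic_askeyWilsonBasis j) hs,
    ← det_tsum_eval_mul_eval _ _ (fun i => askeyWilsonBasis q c i) (fun j => askeyWilsonBasis q d j)
      (fun j => natDegree_askeyWilsonBasis j) (fun j => monic_askeyWilsonBasis j)
      (fun j => natDegree_askeyWilsonBasis j) (fun j => monic_askeyWilsonBasis j) hs,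
    mul_assoc, ← Matrix.det_mul_row, ← Matrix.det_mul_column]
  congr 1
  ext i j
  simp only [Matrix.of_apply, veryWellPoisedSum]
  rw [← mul_assoc, ← tsum_mul_left]
  refine tsum_congr fun k => ?_
  have hshift := bilateralTerm_mul_pow (b := b) hc hd hq hq1 k i j
  rw [bilateralTerm_natCast hb hc hd hq hq1, bilateralTerm_natCast hb (hc.mul_pow hq i)
    (hd.mul_pow hq j) hq hq1, zpow_natCast] at hshift
  linear_combination -(1 - q * (q ^ k) ^ 2) * hshift

/-- The multilateral sum as a determinant of bilateral sums, each of which folds under the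
reflection `ν ↦ -1 - ν` into a very-well-poised `₆φ₅` series. -/
theorem hasSum_prod_bilateralTerm_mul_vandermonde (hb : Nonresonant q b) (hc : Nonresonant q c)
    (hd : Nonresonant q d) (hq : q ≠ 0) (hq1 : ‖q‖ < 1) {m : ℕ}
    (h : ‖q ^ 2 / (b * c * d) * (q ^ (2 * m))⁻¹‖ < 1) :
    HasSum (fun ν : Fin (m + 1) → ℤ =>
        (∏ i, (bilateralTerm q b c d (ν i) * (q ^ ν i)⁻¹ ^ (i : ℕ))) *
          ∏ i, ∏ j ∈ Finset.Ioi i, (symmVar q (q ^ ν j) - symmVar q (q ^ ν i)))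
      ((∏ i : Fin (m + 1), (askeyWilsonBasis q c i).eval (symmVar q 1)) *
        (∏ i : Fin (m + 1), (askeyWilsonBasis q d i).eval (symmVar q 1)) *
        (Matrix.of fun i j : Fin (m + 1) =>
          veryWellPoisedSum q q b (c * q ^ (i : ℕ)) (d * q ^ (j : ℕ))⁻¹).det) := by
  have hentry (i j : Fin (m + 1)) := hasSum_bilateralTerm_mul_eval hb hc hd hq hq1 h
    (askeyWilsonBasis q d j) (i := i) (by rw [natDegree_askeyWilsonBasis]; lia)
  have hsum := hasSum_prod_mul_vandermonde
    (fun (i : Fin (m + 1)) ν => bilateralTerm q b c d ν * (q ^ ν)⁻¹ ^ (i : ℕ))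
    (fun ν => symmVar q (q ^ ν)) (fun j => askeyWilsonBasis q d j)
    (fun j => natDegree_askeyWilsonBasis j) (fun j => monic_askeyWilsonBasis j)
    fun i j => (hentry i j).summable.norm
  rw [← det_tsum_dickson_mul_askeyWilsonBasis hb hc hd hq hq1 (by lia) h]
  simpa only [(hentry _ _).tsum_eq] using hsum

end BilateralTerm

section DeterminantEvaluation

open Polynomial

variable {q b c d : ℂ}

lemma Nonresonant.mul_inv_pow (hb : Nonresonant q b) (hq : q ≠ 0) (k : ℕ) :
    Nonresonant q (b * q⁻¹ ^ k) := by
  simpa using hb.mul_zpow hq (-k)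

lemma qPochInf_mul_inv_pow (hq : q ≠ 0) (hq1 : ‖q‖ < 1) (x : ℂ) (j : ℕ) :
    qPochInf (x * q⁻¹ ^ j) q =
      (∏ k ∈ Finset.range j, (1 - x * q⁻¹ ^ (k + 1))) * qPochInf x q := by
  induction j with
  | zero => simp
  | succ j ih =>
    rw [qPochInf_eq_one_sub_mul hq1, Finset.prod_range_succ,
      show x * q⁻¹ ^ (j + 1) * q = x * q⁻¹ ^ j by rw [pow_succ]; field_simp, ih]
    ring

lemma qPochInf_mul_inv_pow_Ico (hq : q ≠ 0) (hq1 : ‖q‖ < 1) (x : ℂ) {j m : ℕ} (hj : j ≤ m) :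
    qPochInf (x * q⁻¹ ^ m) q =
      (∏ k ∈ Finset.Ico j m, (1 - x * q⁻¹ ^ (k + 1))) * qPochInf (x * q⁻¹ ^ j) q := by
  rw [qPochInf_mul_inv_pow hq hq1, qPochInf_mul_inv_pow hq hq1,
    ← Finset.prod_range_mul_prod_Ico _ hj]
  ring

lemma eval_askeyWilsonBasis_one (hb : b ≠ 0) (hq : q ≠ 0) (hq1 : ‖q‖ < 1) (i : ℕ) :
    (askeyWilsonBasis q b i).eval (symmVar q 1) * qPochInf (q ^ 2 / b) q =
      qPoch b q i * qPochInf (q ^ 2 / b * q⁻¹ ^ i) q := by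
  rw [qPochInf_mul_inv_pow hq hq1, ← mul_assoc, askeyWilsonBasis, qPoch, eval_prod,
    ← Finset.prod_mul_distrib]
  congr 1
  refine Finset.prod_congr rfl fun r _ => ?_
  rw [eval_sub, eval_X, eval_C,
    symmVar_sub_symmVar_inv one_ne_zero (mul_ne_zero hb (pow_ne_zero r hq)),
    show q ^ 2 / b * q⁻¹ ^ (r + 1) = q / (b * q ^ r) by rw [inv_pow]; field_simp; ring]
  ring

lemma prod_pow_mul_qPoch (hq : q ≠ 0) (a β : ℂ) (m : ℕ) :
    ∏ i : Fin (m + 1), ((β * q⁻¹ ^ (i : ℕ)) ^ (i : ℕ) * qPoch a q i) =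
      ∏ l ∈ Finset.range m, ∏ k ∈ Finset.range (l + 1),
        (β * q⁻¹ ^ (l + 1) - β * a * q⁻¹ ^ (k + 1)) := by
  rw [Fin.prod_univ_eq_prod_range (fun i => (β * q⁻¹ ^ i) ^ i * qPoch a q i),
    Finset.prod_range_succ', pow_zero, qPoch_zero, mul_one, mul_one]
  refine Finset.prod_congr rfl fun l _ => ?_
  rw [qPoch, ← Finset.prod_range_reflect, Finset.pow_eq_prod_const, ← Finset.prod_mul_distrib]
  refine Finset.prod_congr rfl fun k hk => ?_
  obtain ⟨p, rfl⟩ := Nat.exists_eq_add_of_le (Finset.mem_range_succ_iff.1 hk)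
  rw [show k + p + 1 - 1 - k = p by lia, inv_pow, inv_pow]
  field_simp
  ring

theorem det_qPochInf_div_qPochInf (hq : q ≠ 0) (hq1 : ‖q‖ < 1) (a β : ℂ) (m : ℕ)
    (hβ : ∀ i ≤ 2 * m, qPochInf (β * q⁻¹ ^ i) q ≠ 0) :
    (Matrix.of fun i j : Fin (m + 1) => qPochInf (β * a * q⁻¹ ^ (i + j : ℕ)) q /
        qPochInf (β * q⁻¹ ^ (i + j : ℕ)) q).det =
      (∏ i : Fin (m + 1), qPochInf (β * a * q⁻¹ ^ (i : ℕ)) q /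
          qPochInf (β * q⁻¹ ^ (i + m : ℕ)) q) *
        ((∏ i : Fin (m + 1), ∏ j ∈ Finset.Ioi i, (q⁻¹ ^ (j : ℕ) - q⁻¹ ^ (i : ℕ))) *
          ∏ i : Fin (m + 1), ((β * q⁻¹ ^ (i : ℕ)) ^ (i : ℕ) * qPoch a q i)) := by
  rw [prod_pow_mul_qPoch hq, ← det_prod_one_sub_mul_prod_one_sub m
    (fun k => β * a * q⁻¹ ^ (k + 1)) (fun k => β * q⁻¹ ^ (k + 1)) (fun i => q⁻¹ ^ (i : ℕ)),
    ← Matrix.det_mul_column]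
  congr 1
  ext i j
  have hij := hβ (i + j) (by lia)
  have him := hβ (i + m) (by lia)
  have hnum := qPochInf_mul_inv_pow hq hq1 (β * a * q⁻¹ ^ (i : ℕ)) j
  have hden := qPochInf_mul_inv_pow_Ico hq hq1 (β * q⁻¹ ^ (i : ℕ)) (Nat.le_of_lt_succ j.2)
  simp only [mul_assoc _ (q⁻¹ ^ (i : ℕ)), ← pow_add] at hnum hden
  simp only [mul_assoc _ (q⁻¹ ^ (_ + 1)), ← pow_add, Matrix.of_apply, add_comm _ (i : ℕ)]
  rw [div_mul_eq_mul_div, div_eq_div_iff hij him, hnum, hden]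
  ring

lemma bilateralTerm_eq_qPochInt (q b c d : ℂ) (ν : ℤ) :
    bilateralTerm q b c d ν = qPochInt b q ν * qPochInt c q ν * qPochInt d q ν /
      (qPochInt (q ^ 2 / b) q ν * qPochInt (q ^ 2 / c) q ν * qPochInt (q ^ 2 / d) q ν) *
        (q ^ 2 / (b * c * d)) ^ ν := by
  rw [bilateralTerm, bilateralFactor, bilateralFactor, bilateralFactor, div_zpow, mul_zpow,
    mul_zpow, ← zpow_natCast, ← zpow_natCast, zpow_comm]
  simp only [zpow_neg, div_eq_mul_inv, mul_inv]
  ring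

lemma bilateralTerm_natCast_eq_qPoch (hb : Nonresonant q b) (hc : Nonresonant q c)
    (hd : Nonresonant q d) (hq : q ≠ 0) (hq1 : ‖q‖ < 1) (k : ℕ) :
    bilateralTerm q b c d k = qPoch b q k * qPoch c q k * qPoch d q k /
      (qPoch (q ^ 2 / b) q k * qPoch (q ^ 2 / c) q k * qPoch (q ^ 2 / d) q k) *
        (q ^ 2 / (b * c * d)) ^ k := by
  have hpoch {e : ℂ} (he : Nonresonant q e) : qPochInt e q k = qPoch e q k := by
    rw [qPochInt, zpow_natCast, qPochInf_eq_qPoch_mul hq1 e k,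
      mul_div_cancel_right₀ _ ((he.mul_pow hq k).qPochInf_ne_zero hq hq1)]
  rw [bilateralTerm_eq_qPochInt, hpoch hb, hpoch hc, hpoch hd, hpoch (hb.pow_div hq 2),
    hpoch (hc.pow_div hq 2), hpoch (hd.pow_div hq 2), zpow_natCast]

lemma norm_mul_inv_pow_lt_one (hq : q ≠ 0) (hq1 : ‖q‖ < 1) {β : ℂ} {i m : ℕ} (hi : i ≤ m)
    (h : ‖β * (q ^ m)⁻¹‖ < 1) : ‖β * q⁻¹ ^ i‖ < 1 := by
  obtain ⟨l, rfl⟩ := Nat.exists_eq_add_of_le hi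
  have hsplit : β * q⁻¹ ^ i = β * (q ^ (i + l))⁻¹ * q ^ l := by
    rw [inv_pow]
    field_simp
    ring
  rw [hsplit, norm_mul, norm_pow]
  exact mul_lt_one_of_nonneg_of_lt_one_left (norm_nonneg _) h
    (pow_le_one₀ (norm_nonneg _) hq1.le)

lemma qPochInf_ne_zero_of_norm_lt_one (hq1 : ‖q‖ < 1) {a : ℂ} (ha : ‖a‖ < 1) :
    qPochInf a q ≠ 0 := by
  refine qPochInf_ne_zero hq1 fun k hk => ?_
  have hlt : ‖a * q ^ k‖ < 1 := by
    rw [norm_mul, norm_pow]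
    exact mul_lt_one_of_nonneg_of_lt_one_left (norm_nonneg _) ha
      (pow_le_one₀ (norm_nonneg _) hq1.le)
  rw [hk, norm_one] at hlt
  exact lt_irrefl _ hlt

lemma veryWellPoisedSum_mul_pow (hb : Nonresonant q b) (hc : Nonresonant q c)
    (hd : Nonresonant q d) (hq : q ≠ 0) (hq1 : ‖q‖ < 1) {i j : ℕ}
    (h : ‖q ^ 2 / (b * c * d) * q⁻¹ ^ (i + j)‖ < 1) :
    veryWellPoisedSum q q b (c * q ^ i) (d * q ^ j)⁻¹ =
      qPochInf q q * qPochInf (q ^ 2 / (b * c) * q⁻¹ ^ i) q *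
          qPochInf (q ^ 2 / (b * d) * q⁻¹ ^ j) q *
          qPochInf (q ^ 2 / (c * d) * q⁻¹ ^ (i + j)) q /
        (qPochInf (q ^ 2 / b) q * qPochInf (q ^ 2 / c * q⁻¹ ^ i) q *
          qPochInf (q ^ 2 / d * q⁻¹ ^ j) q *
          qPochInf (q ^ 2 / (b * c * d) * q⁻¹ ^ (i + j)) q) := by
  have hb0 := hb.1
  have hci := hc.mul_pow hq i
  have hdj := hd.mul_pow hq j
  have hne {e : ℂ} (he : Nonresonant q e) (k : ℕ) : q * q * q ^ k ≠ e := fun hk =>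
    he.2 (k + 2 : ℕ) (by rw [← hk, zpow_natCast]; ring)
  have hratio : q * q * (d * q ^ j)⁻¹ / (b * (c * q ^ i)) =
      q ^ 2 / (b * c * d) * q⁻¹ ^ (i + j) := by
    simp only [div_eq_mul_inv, mul_inv, pow_add, inv_pow]
    ring
  rw [rogers_six_phi_five hq1 hb0 hci.1
    (fun k => by
      rw [show q * q * q ^ k = q ^ (k + 2) by ring]
      exact (sub_ne_zero.1 (one_sub_pow_ne_zero hq1 (k + 1).succ_ne_zero)).symm)
    (hne hb) (hne hci)
    (fun k hk => (hdj.pow_div hq 2).one_sub_mul_pow_ne_zero hq k (by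
      rw [sub_eq_zero, ← hk]; ring)) (by rwa [hratio]), hratio]
  simp only [div_eq_mul_inv, mul_inv, pow_add, inv_pow, pow_two]
  ring_nf

lemma det_veryWellPoisedSum (hb : Nonresonant q b) (hc : Nonresonant q c)
    (hd : Nonresonant q d) (hq : q ≠ 0) (hq1 : ‖q‖ < 1) {m : ℕ}
    (h : ‖q ^ 2 / (b * c * d) * (q ^ (2 * m))⁻¹‖ < 1) :
    (Matrix.of fun i j : Fin (m + 1) =>
        veryWellPoisedSum q q b (c * q ^ (i : ℕ)) (d * q ^ (j : ℕ))⁻¹).det =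
      (∏ i : Fin (m + 1), ∏ j ∈ Finset.Ioi i, (q⁻¹ ^ (j : ℕ) - q⁻¹ ^ (i : ℕ))) *
        ∏ i : Fin (m + 1), (qPochInf q q * qPochInf (q ^ 2 / (b * c) * q⁻¹ ^ (i : ℕ)) q *
            qPochInf (q ^ 2 / (b * d) * q⁻¹ ^ (i : ℕ)) q *
            qPochInf (q ^ 2 / (c * d) * q⁻¹ ^ (i : ℕ)) q /
          (qPochInf (q ^ 2 / b) q * qPochInf (q ^ 2 / c * q⁻¹ ^ (i : ℕ)) q *
            qPochInf (q ^ 2 / d * q⁻¹ ^ (i : ℕ)) q *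
            qPochInf (q ^ 2 / (b * c * d) * q⁻¹ ^ (i + m : ℕ)) q) *
          ((q ^ 2 / (b * c * d) * q⁻¹ ^ (i : ℕ)) ^ (i : ℕ) * qPoch b q i)) := by
  have hb0 := hb.1
  have hcd : q ^ 2 / (c * d) = q ^ 2 / (b * c * d) * b := by field_simp
  have hnorm {i : ℕ} (hi : i ≤ 2 * m) := norm_mul_inv_pow_lt_one hq hq1 hi h
  have hentry (i j : Fin (m + 1)) :
      veryWellPoisedSum q q b (c * q ^ (i : ℕ)) (d * q ^ (j : ℕ))⁻¹ =
        (qPochInf q q * qPochInf (q ^ 2 / (b * c) * q⁻¹ ^ (i : ℕ)) q /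
          (qPochInf (q ^ 2 / b) q * qPochInf (q ^ 2 / c * q⁻¹ ^ (i : ℕ)) q)) *
        ((qPochInf (q ^ 2 / (b * d) * q⁻¹ ^ (j : ℕ)) q /
            qPochInf (q ^ 2 / d * q⁻¹ ^ (j : ℕ)) q) *
          (qPochInf (q ^ 2 / (b * c * d) * b * q⁻¹ ^ (i + j : ℕ)) q /
            qPochInf (q ^ 2 / (b * c * d) * q⁻¹ ^ (i + j : ℕ)) q)) := by
    rw [veryWellPoisedSum_mul_pow hb hc hd hq hq1 (hnorm (by lia)), hcd]
    simp only [div_eq_mul_inv, mul_inv]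
    ring
  simp only [hentry]
  refine (Matrix.det_mul_column _ _).trans ((congrArg _ (Matrix.det_mul_row _ _)).trans
    ((congrArg _ (congrArg _ (det_qPochInf_div_qPochInf hq hq1 b _ m fun i hi =>
      qPochInf_ne_zero_of_norm_lt_one hq1 (hnorm hi)))).trans ?_))
  rw [← hcd]
  simp only [Finset.prod_mul_distrib, div_eq_mul_inv,
    Finset.prod_inv_distrib, mul_inv]
  ring

lemma eval_askeyWilsonBasis_one_mul_qPochInf_ratio (hb : Nonresonant q b) (hc : Nonresonant q c)
    (hd : Nonresonant q d) (hq : q ≠ 0) (hq1 : ‖q‖ < 1) (i : ℕ) :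
    (askeyWilsonBasis q c i).eval (symmVar q 1) * (askeyWilsonBasis q d i).eval (symmVar q 1) *
        ((qPochInf (q ^ 2 / b) q * qPochInf (q ^ 2 / c * q⁻¹ ^ i) q *
          qPochInf (q ^ 2 / d * q⁻¹ ^ i) q)⁻¹ *
        ((q ^ 2 / (b * c * d)) ^ i * qPoch b q i)) =
      bilateralTerm q b c d i * (qPochInf (q ^ 2 / b * q ^ i) q * qPochInf (q ^ 2 / c * q ^ i) q *
        qPochInf (q ^ 2 / d * q ^ i) q)⁻¹ := by
  have hQc := hc.pow_div hq 2
  have hQd := hd.pow_div hq 2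
  rw [eq_div_of_mul_eq (hQc.qPochInf_ne_zero hq hq1) (eval_askeyWilsonBasis_one hc.1 hq hq1 i),
    eq_div_of_mul_eq (hQd.qPochInf_ne_zero hq hq1) (eval_askeyWilsonBasis_one hd.1 hq hq1 i),
    bilateralTerm_natCast_eq_qPoch hb hc hd hq hq1, qPochInf_eq_qPoch_mul hq1 (q ^ 2 / b) i,
    qPochInf_eq_qPoch_mul hq1 (q ^ 2 / c) i, qPochInf_eq_qPoch_mul hq1 (q ^ 2 / d) i]
  have hc' := (hQc.mul_inv_pow hq i).qPochInf_ne_zero hq hq1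
  have hd' := (hQd.mul_inv_pow hq i).qPochInf_ne_zero hq hq1
  generalize qPochInf (q ^ 2 / c * q⁻¹ ^ i) q = u, qPochInf (q ^ 2 / d * q⁻¹ ^ i) q = v at *
  field_simp

theorem hasSum_prod_bilateralTerm_mul_vandermonde_eq (hb : Nonresonant q b)
    (hc : Nonresonant q c) (hd : Nonresonant q d) (hq : q ≠ 0) (hq1 : ‖q‖ < 1) {m : ℕ}
    (h : ‖q ^ 2 / (b * c * d) * (q ^ (2 * m))⁻¹‖ < 1) :
    HasSum (fun ν : Fin (m + 1) → ℤ =>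
        (∏ i, (bilateralTerm q b c d (ν i) * (q ^ ν i)⁻¹ ^ (i : ℕ))) *
          ∏ i, ∏ j ∈ Finset.Ioi i, (symmVar q (q ^ ν j) - symmVar q (q ^ ν i)))
      ((∏ i : Fin (m + 1), (bilateralTerm q b c d (i : ℕ) * (q⁻¹ ^ (i : ℕ)) ^ (i : ℕ))) *
        (∏ i : Fin (m + 1), ∏ j ∈ Finset.Ioi i, (q⁻¹ ^ (j : ℕ) - q⁻¹ ^ (i : ℕ))) *
        ∏ i : Fin (m + 1), (qPochInf q q * (qPochInf (q ^ 2 / (b * c) * q⁻¹ ^ (i : ℕ)) q *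
            qPochInf (q ^ 2 / (b * d) * q⁻¹ ^ (i : ℕ)) q *
            qPochInf (q ^ 2 / (c * d) * q⁻¹ ^ (i : ℕ)) q /
          (qPochInf (q ^ 2 / b * q ^ (i : ℕ)) q * qPochInf (q ^ 2 / c * q ^ (i : ℕ)) q *
            qPochInf (q ^ 2 / d * q ^ (i : ℕ)) q *
            qPochInf (q ^ 2 / (b * c * d) * q⁻¹ ^ (i + m : ℕ)) q)))) := by
  convert hasSum_prod_bilateralTerm_mul_vandermonde hb hc hd hq hq1 h using 1
  rw [det_veryWellPoisedSum hb hc hd hq hq1 h, mul_left_comm, mul_right_comm, mul_comm]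
  congr 1
  simp only [← Finset.prod_mul_distrib]
  refine Finset.prod_congr rfl fun i _ => ?_
  have hkey := eval_askeyWilsonBasis_one_mul_qPochInf_ratio hb hc hd hq hq1 i
  rw [mul_pow (q ^ 2 / (b * c * d))]
  simp only [div_eq_mul_inv, mul_inv] at hkey ⊢
  linear_combination (-(qPochInf q q *
    (qPochInf (q ^ 2 * (b⁻¹ * c⁻¹) * q⁻¹ ^ (i : ℕ)) q *
      qPochInf (q ^ 2 * (b⁻¹ * d⁻¹) * q⁻¹ ^ (i : ℕ)) q *
      qPochInf (q ^ 2 * (c⁻¹ * d⁻¹) * q⁻¹ ^ (i : ℕ)) q *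
      (qPochInf (q ^ 2 * (b⁻¹ * c⁻¹ * d⁻¹) * q⁻¹ ^ (i + m : ℕ)) q)⁻¹) *
    (q⁻¹ ^ (i : ℕ)) ^ (i : ℕ))) * hkey

end DeterminantEvaluation

section PairProducts

variable {M : Type*} [CommMonoid M]

lemma prod_prod_Ioi_eq_prod_prod_Iio {n : ℕ} (f : Fin n → Fin n → M) :
    ∏ i, ∏ j ∈ Finset.Ioi i, f i j = ∏ j, ∏ i ∈ Finset.Iio j, f i j :=
  Finset.prod_comm' fun _ _ => by simp

lemma prod_prod_Ioi_castSucc_mul_prod_last {m : ℕ} (f : Fin (m + 1) → Fin (m + 1) → M) :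
    ∏ i, ∏ j ∈ Finset.Ioi i, f i j =
      (∏ i : Fin m, ∏ j ∈ Finset.Ioi i, f i.castSucc j.castSucc) *
        ∏ i : Fin m, f i.castSucc (Fin.last m) := by
  have hlast : Finset.Iio (Fin.last m) = Finset.univ.map Fin.castSuccEmb := by
    ext i
    simp [Fin.exists_castSucc_eq]
  rw [prod_prod_Ioi_eq_prod_prod_Iio, prod_prod_Ioi_eq_prod_prod_Iio]
  simp only [Fin.prod_univ_castSucc, ← Fin.map_castSuccEmb_Iio,
    hlast, Finset.prod_map, Fin.coe_castSuccEmb]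

lemma prod_prod_Ioi_rev {n : ℕ} (f : Fin n → Fin n → M) :
    ∏ i, ∏ j ∈ Finset.Ioi i, f i j = ∏ i, ∏ j ∈ Finset.Ioi i, f (Fin.rev j) (Fin.rev i) := by
  rw [prod_prod_Ioi_eq_prod_prod_Iio, ← Equiv.prod_comp Fin.revPerm]
  refine Finset.prod_congr rfl fun i _ => ?_
  rw [Fin.revPerm_apply, ← Fin.map_revPerm_Ioi, Finset.prod_map]
  rfl

lemma prod_prod_Ioi_right {n : ℕ} (g : Fin n → M) :
    ∏ i, ∏ j ∈ Finset.Ioi i, g j = ∏ j, g j ^ (j : ℕ) := by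
  simp only [prod_prod_Ioi_eq_prod_prod_Iio, Finset.prod_const, Fin.card_Iio]

end PairProducts

section Convergence

variable {q b c d : ℂ}

lemma norm_lt_one_of_tendsto_mul_pow_zero {w : ℕ → ℂ} {W γ : ℂ} (hw : Tendsto w atTop (𝓝 W))
    (hW : W ≠ 0) (h : Tendsto (fun N => w N * γ ^ N) atTop (𝓝 0)) : ‖γ‖ < 1 := by
  by_contra! hγ
  refine hW (tendsto_nhds_unique hw (squeeze_zero_norm (fun N => ?_) (by simpa using h.norm)))
  exact le_mul_of_one_le_right (norm_nonneg _) (one_le_pow₀ hγ)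

lemma one_sub_zpow_sub_mul_one_sub_zpow_add (hq : q ≠ 0) (x y : ℤ) :
    (1 - q ^ (x - y)) * (1 - q ^ (x + y + 1)) =
      q ^ x * (symmVar q (q ^ x) - symmVar q (q ^ y)) := by
  have hx := zpow_ne_zero x hq
  have hy := zpow_ne_zero y hq
  rw [symmVar, symmVar, zpow_sub₀ hq, zpow_add_one₀ hq, zpow_add₀ hq]
  field_simp
  ring

lemma symmVar_zpow_sub_ne_zero (hq : q ≠ 0) (hq1 : ‖q‖ < 1) {i j : ℕ} (h : i < j) :
    symmVar q (q ^ (j : ℤ)) - symmVar q (q ^ (i : ℤ)) ≠ 0 := by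
  refine right_ne_zero_of_mul (a := q ^ (j : ℤ)) ?_
  rw [← one_sub_zpow_sub_mul_one_sub_zpow_add hq, ← Nat.cast_sub h.le]
  exact mul_ne_zero (mod_cast one_sub_pow_ne_zero hq1 (by lia))
    (mod_cast one_sub_pow_ne_zero hq1 (by lia))

lemma tendsto_qPoch_ratio (hb : Nonresonant q b) (hc : Nonresonant q c) (hd : Nonresonant q d)
    (hq : q ≠ 0) (hq1 : ‖q‖ < 1) :
    Tendsto (fun N => qPoch b q N * qPoch c q N * qPoch d q N /
        (qPoch (q ^ 2 / b) q N * qPoch (q ^ 2 / c) q N * qPoch (q ^ 2 / d) q N)) atTop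
      (𝓝 (qPochInf b q * qPochInf c q * qPochInf d q /
        (qPochInf (q ^ 2 / b) q * qPochInf (q ^ 2 / c) q * qPochInf (q ^ 2 / d) q))) :=
  (((tendsto_qPoch hq1 b).mul (tendsto_qPoch hq1 c)).mul (tendsto_qPoch hq1 d)).div
    (((tendsto_qPoch hq1 _).mul (tendsto_qPoch hq1 _)).mul (tendsto_qPoch hq1 _))
    (mul_ne_zero (mul_ne_zero ((hb.pow_div hq 2).qPochInf_ne_zero hq hq1)
      ((hc.pow_div hq 2).qPochInf_ne_zero hq hq1)) ((hd.pow_div hq 2).qPochInf_ne_zero hq hq1))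

lemma tendsto_prod_pow_mul_symmVar_sub (hq : q ≠ 0) (hq1 : ‖q‖ < 1) {m : ℕ} (y : Fin m → ℂ) :
    Tendsto (fun N : ℕ => ∏ i, q ^ N * (symmVar q (q ^ N) - y i)) atTop (𝓝 1) := by
  have hexpand (N : ℕ) (i : Fin m) :
      q ^ N * (symmVar q (q ^ N) - y i) = 1 + q * (q ^ N) ^ 2 - q ^ N * y i := by
    have hN := pow_ne_zero N hq
    rw [symmVar]
    field_simp
  have hpow := tendsto_pow_atTop_nhds_zero_of_norm_lt_one hq1
  have hfactor (i : Fin m) : Tendsto (fun N : ℕ => q ^ N * (symmVar q (q ^ N) - y i)) atTop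
      (𝓝 1) := by
    simpa [hexpand] using
      (((hpow.pow 2).const_mul q).const_add 1).sub (hpow.mul_const (y i))
  simpa using tendsto_finsetProd Finset.univ fun i _ => hfactor i

lemma prod_bilateralTerm_mul_vandermonde_snoc (hb : Nonresonant q b) (hc : Nonresonant q c)
    (hd : Nonresonant q d) (hq : q ≠ 0) (hq1 : ‖q‖ < 1) {m : ℕ} (κ : Fin m → ℤ) (N : ℕ)
    {ν : Fin (m + 1) → ℤ} (hν : ν = Fin.snoc (α := fun _ => ℤ) κ (N : ℤ)) :
    (∏ i, (bilateralTerm q b c d (ν i) * (q ^ ν i)⁻¹ ^ (i : ℕ))) *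
        ∏ i, ∏ j ∈ Finset.Ioi i, (symmVar q (q ^ ν j) - symmVar q (q ^ ν i)) =
      (∏ i, (bilateralTerm q b c d (κ i) * (q ^ κ i)⁻¹ ^ (i : ℕ))) *
        (∏ i, ∏ j ∈ Finset.Ioi i, (symmVar q (q ^ κ j) - symmVar q (q ^ κ i))) *
        ((qPoch b q N * qPoch c q N * qPoch d q N /
          (qPoch (q ^ 2 / b) q N * qPoch (q ^ 2 / c) q N * qPoch (q ^ 2 / d) q N)) *
        ∏ i, q ^ N * (symmVar q (q ^ N) - symmVar q (q ^ κ i))) *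
        (q ^ 2 / (b * c * d) * (q ^ (2 * m))⁻¹) ^ N := by
  have hpow : ((q ^ (2 * m))⁻¹) ^ N * (q ^ N) ^ m = (q ^ N)⁻¹ ^ m := by
    simp only [inv_pow, ← pow_mul]
    rw [show 2 * m * N = N * m + N * m by ring, pow_add]
    field_simp
  rw [prod_prod_Ioi_castSucc_mul_prod_last, Fin.prod_univ_castSucc]
  simp only [hν, Fin.snoc_castSucc, Fin.snoc_last, Fin.val_castSucc, Fin.val_last]
  rw [bilateralTerm_natCast_eq_qPoch hb hc hd hq hq1, zpow_natCast, ← hpow,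
    Finset.prod_mul_distrib (f := fun _ => q ^ N), Finset.prod_const, Finset.card_univ,
    Fintype.card_fin]
  ring

theorem norm_lt_one_of_summable_prod_bilateralTerm (hb : Nonresonant q b) (hc : Nonresonant q c)
    (hd : Nonresonant q d) (hq : q ≠ 0) (hq1 : ‖q‖ < 1) {m : ℕ}
    (hsum : Summable fun ν : Fin (m + 1) → ℤ =>
      (∏ i, (bilateralTerm q b c d (ν i) * (q ^ ν i)⁻¹ ^ (i : ℕ))) *
        ∏ i, ∏ j ∈ Finset.Ioi i, (symmVar q (q ^ ν j) - symmVar q (q ^ ν i))) :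
    ‖q ^ 2 / (b * c * d) * (q ^ (2 * m))⁻¹‖ < 1 := by
  let κ : Fin m → ℤ := fun i => (i : ℕ)
  have hinj : Function.Injective fun N : ℕ => Fin.snoc (α := fun _ => ℤ) κ (N : ℤ) :=
    fun N N' h => by simpa using congrFun h (Fin.last m)
  have hzero := (hsum.comp_injective hinj).tendsto_atTop_zero
  simp only [Function.comp_def,
    prod_bilateralTerm_mul_vandermonde_snoc hb hc hd hq hq1 κ _ rfl] at hzero
  refine norm_lt_one_of_tendsto_mul_pow_zero (((tendsto_qPoch_ratio hb hc hd hq hq1).mul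
    (tendsto_prod_pow_mul_symmVar_sub hq hq1 _)).const_mul _) ?_ hzero
  have hfactors : ∏ i, (bilateralTerm q b c d (κ i) * (q ^ κ i)⁻¹ ^ (i : ℕ)) ≠ 0 :=
    Finset.prod_ne_zero_iff.2 fun i _ =>
      mul_ne_zero (bilateralTerm_ne_zero hb hc hd hq hq1 _) (by positivity)
  have hvandermonde :
      ∏ i, ∏ j ∈ Finset.Ioi i, (symmVar q (q ^ κ j) - symmVar q (q ^ κ i)) ≠ 0 :=
    Finset.prod_ne_zero_iff.2 fun i _ => Finset.prod_ne_zero_iff.2 fun j hj =>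
      symmVar_zpow_sub_ne_zero hq hq1 (Fin.lt_def.1 (Finset.mem_Ioi.1 hj))
  have hb' := hb.qPochInf_ne_zero hq hq1
  have hc' := hc.qPochInf_ne_zero hq hq1
  have hd' := hd.qPochInf_ne_zero hq hq1
  have hQb := (hb.pow_div hq 2).qPochInf_ne_zero hq hq1
  have hQc := (hc.pow_div hq 2).qPochInf_ne_zero hq hq1
  have hQd := (hd.pow_div hq 2).qPochInf_ne_zero hq hq1
  exact mul_ne_zero (mul_ne_zero hfactors hvandermonde) (by rw [mul_one]; positivity)

end Convergence

section MultilateralTerm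

/-- The summand of the multilateral `₃ψ₃` series with numerator parameters `b, c, d`, the
denominator parameters and the argument being tied to these as in the well-poised case. -/
noncomputable def multilateralTerm (n : ℕ) (q b c d : ℂ) (μ : Fin n → ℤ) : ℂ :=
  q ^ ((1 - (n : ℤ)) * (∑ i : Fin n, μ i) + 2 * ∑ i : Fin n, ((i : ℕ) : ℤ) * μ i) *
      (q ^ (2 * (n : ℤ)) / (b * c * d)) ^ (∑ i : Fin n, μ i) *
    (qPochIntVec n b q μ * qPochIntVec n c q μ * qPochIntVec n d q μ /
      (qPochIntVec n (q ^ (2 * (n : ℤ)) / b) q μ * qPochIntVec n (q ^ (2 * (n : ℤ)) / c) q μ *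
        qPochIntVec n (q ^ (2 * (n : ℤ)) / d) q μ)) *
    ∏ i : Fin n, ∏ j ∈ Finset.Ioi i,
      ((1 - q ^ (((j : ℕ) : ℤ) - ((i : ℕ) : ℤ) + μ i - μ j)) *
        (1 - q ^ (2 * (n : ℤ) - 1 - ((i : ℕ) : ℤ) - ((j : ℕ) : ℤ) + μ i + μ j)) /
        ((1 - q ^ (((j : ℕ) : ℤ) - ((i : ℕ) : ℤ))) ^ 2 *
          (1 - q ^ (2 * (n : ℤ) - 1 - ((i : ℕ) : ℤ) - ((j : ℕ) : ℤ))) ^ 2))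

/-- The change of summation index `ν_i = μ_{n-1-i} + i`, under which the pair factors of the
multilateral summand become differences of `symmVar q (q ^ ν_i)`. -/
def reverseShift (n : ℕ) : (Fin n → ℤ) ≃ (Fin n → ℤ) where
  toFun μ x := μ (Fin.rev x) + (x : ℕ)
  invFun ν x := ν (Fin.rev x) - (Fin.rev x : ℕ)
  left_inv μ := by funext x; simp
  right_inv ν := by funext x; simp

/-- The factor by which the multilateral summand exceeds the product of bilateral terms and the
Vandermonde product after the change of index `reverseShift`. -/
noncomputable def multilateralConst (m : ℕ) (q b c d : ℂ) : ℂ :=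
  (∏ x : Fin (m + 1), q ^ (2 * (x : ℕ) * (x : ℕ)) / bilateralTerm q b c d (x : ℕ)) *
    ∏ i : Fin (m + 1), ∏ j ∈ Finset.Ioi i,
      ((1 - q ^ ((j : ℕ) - (i : ℕ))) ^ 2 * (1 - q ^ ((i : ℕ) + (j : ℕ) + 1)) ^ 2)⁻¹

variable {q b c d : ℂ}

lemma reverseShift_apply {n : ℕ} (μ : Fin n → ℤ) (x : Fin n) :
    reverseShift n μ x = μ (Fin.rev x) + (x : ℕ) :=
  rfl

lemma natCast_val_rev {n : ℕ} (x : Fin n) : ((Fin.rev x : ℕ) : ℤ) = n - 1 - (x : ℕ) := by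
  have hx := x.isLt
  rw [Fin.val_rev]
  lia

lemma zpow_finset_sum {ι : Type*} (hq : q ≠ 0) (t : Finset ι) (e : ι → ℤ) :
    q ^ (∑ i ∈ t, e i) = ∏ i ∈ t, q ^ e i := by
  induction t using Finset.cons_induction with
  | empty => simp
  | cons i t hi ih => rw [Finset.sum_cons, Finset.prod_cons, zpow_add₀ hq, ih]

lemma pow_mul_zpow_neg_rev (hq : q ≠ 0) {m : ℕ} (x : Fin (m + 1)) :
    q ^ m * q ^ (-((Fin.rev x : ℕ) : ℤ)) = q ^ (x : ℕ) := by
  rw [← zpow_natCast q m, ← zpow_add₀ hq, ← zpow_natCast, natCast_val_rev]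
  congr 1
  push_cast
  ring

lemma qPochIntVec_mul_pow (hb : Nonresonant q b) (hq : q ≠ 0) (hq1 : ‖q‖ < 1) {m : ℕ}
    (μ : Fin (m + 1) → ℤ) :
    qPochIntVec (m + 1) (b * q ^ m) q μ =
      ∏ x : Fin (m + 1), qPochInt b q (reverseShift _ μ x) / qPochInt b q (x : ℕ) := by
  rw [qPochIntVec, ← Equiv.prod_comp Fin.revPerm]
  refine Finset.prod_congr rfl fun x _ => ?_
  rw [Fin.revPerm_apply, mul_assoc, pow_mul_zpow_neg_rev hq, reverseShift_apply,
    add_comm (μ _), hb.qPochInt_add hq hq1, zpow_natCast,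
    mul_div_cancel_left₀ _ (hb.qPochInt_ne_zero hq hq1 _)]

lemma qPochInfVec_mul_pow (hq : q ≠ 0) (b : ℂ) (m : ℕ) :
    qPochInfVec (m + 1) (b * q ^ m) q = ∏ x : Fin (m + 1), qPochInf (b * q ^ (x : ℕ)) q := by
  rw [qPochInfVec, ← Equiv.prod_comp Fin.revPerm]
  refine Finset.prod_congr rfl fun x _ => ?_
  rw [Fin.revPerm_apply, mul_assoc, pow_mul_zpow_neg_rev hq]

lemma qPochInfVec_eq_prod_inv_pow (n : ℕ) (q b : ℂ) :
    qPochInfVec n b q = ∏ x : Fin n, qPochInf (b * q⁻¹ ^ (x : ℕ)) q := by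
  simp only [qPochInfVec, zpow_neg, zpow_natCast, inv_pow]

lemma prod_pairs_eq_vandermonde (hq : q ≠ 0) {n : ℕ} (μ : Fin n → ℤ) :
    ∏ i : Fin n, ∏ j ∈ Finset.Ioi i,
      ((1 - q ^ (((j : ℕ) : ℤ) - ((i : ℕ) : ℤ) + μ i - μ j)) *
        (1 - q ^ (2 * (n : ℤ) - 1 - ((i : ℕ) : ℤ) - ((j : ℕ) : ℤ) + μ i + μ j)) /
        ((1 - q ^ (((j : ℕ) : ℤ) - ((i : ℕ) : ℤ))) ^ 2 *
          (1 - q ^ (2 * (n : ℤ) - 1 - ((i : ℕ) : ℤ) - ((j : ℕ) : ℤ))) ^ 2)) =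
      (∏ x : Fin n, (q ^ reverseShift n μ x) ^ (x : ℕ)) *
        (∏ i : Fin n, ∏ j ∈ Finset.Ioi i,
          (symmVar q (q ^ reverseShift n μ j) - symmVar q (q ^ reverseShift n μ i))) *
        ∏ i : Fin n, ∏ j ∈ Finset.Ioi i,
          ((1 - q ^ ((j : ℕ) - (i : ℕ))) ^ 2 * (1 - q ^ ((i : ℕ) + (j : ℕ) + 1)) ^ 2)⁻¹ := by
  rw [prod_prod_Ioi_rev, ← prod_prod_Ioi_right fun x => q ^ reverseShift n μ x]
  simp only [← Finset.prod_mul_distrib]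
  refine Finset.prod_congr rfl fun i _ => Finset.prod_congr rfl fun j hj => ?_
  have hij : (i : ℕ) < j := Fin.lt_def.1 (Finset.mem_Ioi.1 hj)
  rw [← one_sub_zpow_sub_mul_one_sub_zpow_add hq, div_eq_mul_inv, ← zpow_natCast q (_ - _),
    ← zpow_natCast q (_ + 1)]
  simp only [reverseShift_apply, natCast_val_rev]
  push_cast [hij.le]
  ring_nf

lemma zpow_mul_argument_zpow (hq : q ≠ 0) {β : ℂ} (hβ : β ≠ 0) (m x : ℕ) (ν : ℤ) :
    q ^ ((m - 2 * x) * (ν - x)) * (β * (q ^ m)⁻¹) ^ (ν - x) * (q ^ ν) ^ x =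
      q ^ (2 * x * x) * (β ^ x)⁻¹ * (β ^ ν * (q ^ ν)⁻¹ ^ x) := by
  have hexp : q ^ ((m - 2 * x) * (ν - x)) * ((q ^ m)⁻¹) ^ (ν - x) * (q ^ ν) ^ x =
      q ^ (2 * x * x) * (q ^ ν)⁻¹ ^ x := by
    simp only [← zpow_natCast, ← zpow_neg, ← zpow_mul, ← zpow_add₀ hq]
    congr 1
    push_cast
    ring
  rw [mul_zpow, zpow_sub₀ hβ, zpow_natCast]
  linear_combination β ^ ν / β ^ x * hexp

lemma zpow_sum_mul_argument_zpow_sum (hq : q ≠ 0) {β : ℂ} (hβ : β ≠ 0) {m : ℕ}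
    (μ : Fin (m + 1) → ℤ) :
    q ^ ((1 - ((m + 1 : ℕ) : ℤ)) * (∑ i, μ i) + 2 * ∑ i : Fin (m + 1), ((i : ℕ) : ℤ) * μ i) *
        (β * (q ^ m)⁻¹) ^ (∑ i, μ i) * ∏ x : Fin (m + 1), (q ^ reverseShift _ μ x) ^ (x : ℕ) =
      ∏ x : Fin (m + 1), (q ^ (2 * (x : ℕ) * (x : ℕ)) * (β ^ (x : ℕ))⁻¹ *
        (β ^ reverseShift _ μ x * (q ^ reverseShift _ μ x)⁻¹ ^ (x : ℕ))) := by
  have hexp : (1 - ((m + 1 : ℕ) : ℤ)) * (∑ i, μ i) + 2 * ∑ i : Fin (m + 1), ((i : ℕ) : ℤ) * μ i =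
      ∑ i : Fin (m + 1), (2 * ((i : ℕ) : ℤ) - m) * μ i := by
    rw [Finset.mul_sum, Finset.mul_sum, ← Finset.sum_add_distrib]
    refine Finset.sum_congr rfl fun i _ => ?_
    push_cast
    ring
  rw [hexp, zpow_finset_sum hq, zpow_finset_sum (mul_ne_zero hβ (inv_ne_zero (pow_ne_zero _ hq))),
    ← Equiv.prod_comp Fin.revPerm fun i => q ^ _,
    ← Equiv.prod_comp Fin.revPerm fun i => (β * (q ^ m)⁻¹) ^ μ i]
  simp only [← Finset.prod_mul_distrib]
  refine Finset.prod_congr rfl fun x _ => ?_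
  rw [← zpow_mul_argument_zpow hq hβ m, reverseShift_apply, add_sub_cancel_right]
  simp only [Fin.revPerm_apply, natCast_val_rev]
  congr 3
  push_cast
  ring

lemma zpow_two_mul_succ (q : ℂ) (m : ℕ) :
    q ^ (2 * ((m + 1 : ℕ) : ℤ)) = q ^ m * q ^ m * q ^ 2 := by
  rw [← pow_add, ← pow_add, ← zpow_natCast]
  congr 1
  push_cast
  ring

lemma zpow_two_mul_succ_div (hq : q ≠ 0) (b : ℂ) (m : ℕ) :
    q ^ (2 * ((m + 1 : ℕ) : ℤ)) / (b * q ^ m) = q ^ 2 / b * q ^ m := by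
  rw [zpow_two_mul_succ]
  field_simp

lemma zpow_two_mul_succ_div_mul (hq : q ≠ 0) (b c : ℂ) (m : ℕ) :
    q ^ (2 * ((m + 1 : ℕ) : ℤ)) / (b * q ^ m * (c * q ^ m)) = q ^ 2 / (b * c) := by
  rw [zpow_two_mul_succ]
  field_simp

lemma zpow_two_mul_succ_div_mul_mul (hq : q ≠ 0) (b c d : ℂ) (m : ℕ) :
    q ^ (2 * ((m + 1 : ℕ) : ℤ)) / (b * q ^ m * (c * q ^ m) * (d * q ^ m)) =
      q ^ 2 / (b * c * d) * (q ^ m)⁻¹ := by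
  rw [zpow_two_mul_succ]
  field_simp

lemma multilateralTerm_eq (hb : Nonresonant q b) (hc : Nonresonant q c) (hd : Nonresonant q d)
    (hq : q ≠ 0) (hq1 : ‖q‖ < 1) (m : ℕ) (μ : Fin (m + 1) → ℤ) :
    multilateralTerm (m + 1) q (b * q ^ m) (c * q ^ m) (d * q ^ m) μ =
      multilateralConst m q b c d *
        ((∏ i, (bilateralTerm q b c d (reverseShift _ μ i) *
            (q ^ reverseShift _ μ i)⁻¹ ^ (i : ℕ))) *
          ∏ i, ∏ j ∈ Finset.Ioi i, (symmVar q (q ^ reverseShift _ μ j) -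
            symmVar q (q ^ reverseShift _ μ i))) := by
  have hβ : q ^ 2 / (b * c * d) ≠ 0 :=
    div_ne_zero (pow_ne_zero _ hq) (mul_ne_zero (mul_ne_zero hb.1 hc.1) hd.1)
  rw [multilateralTerm, zpow_two_mul_succ_div_mul_mul hq, zpow_two_mul_succ_div hq,
    zpow_two_mul_succ_div hq, zpow_two_mul_succ_div hq, prod_pairs_eq_vandermonde hq,
    multilateralConst,
    qPochIntVec_mul_pow hb hq hq1, qPochIntVec_mul_pow hc hq hq1, qPochIntVec_mul_pow hd hq hq1,
    qPochIntVec_mul_pow (hb.pow_div hq 2) hq hq1, qPochIntVec_mul_pow (hc.pow_div hq 2) hq hq1,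
    qPochIntVec_mul_pow (hd.pow_div hq 2) hq hq1, ← mul_assoc, ← mul_assoc,
    mul_right_comm _ _ (∏ x : Fin (m + 1), (_ : ℂ) ^ (x : ℕ)),
    zpow_sum_mul_argument_zpow_sum hq hβ]
  simp only [bilateralTerm_eq_qPochInt, div_eq_mul_inv, mul_inv, inv_inv, Finset.prod_mul_distrib,
    Finset.prod_inv_distrib, zpow_natCast]
  ring

lemma qPochInf_self_pow (hq1 : ‖q‖ < 1) (n : ℕ) :
    qPochInf q q ^ n =
      (∏ i : Fin n, ∏ j ∈ Finset.Ioi i,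
          ((1 - q ^ ((j : ℕ) - (i : ℕ))) * (1 - q ^ ((i : ℕ) + (j : ℕ) + 1)) ^ 2)) *
        (∏ i ∈ Finset.range n, (1 - q ^ (2 * i + 1))) *
        ∏ i ∈ Finset.range n, qPochInf (q ^ (n + 1 + i)) q := by
  have hshift (k l : ℕ) : qPochInf (q ^ k) q =
      (∏ i ∈ Finset.range l, (1 - q ^ (k + i))) * qPochInf (q ^ (k + l)) q := by
    simpa only [qPoch, ← pow_add] using qPochInf_eq_qPoch_mul hq1 (q ^ k) l
  induction n with
  | zero => simp
  | succ n ih =>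
    have hself : qPochInf q q =
        (∏ i : Fin n, (1 - q ^ (n - (i : ℕ)))) * qPochInf (q ^ (n + 1)) q := by
      have h := hshift 1 n
      rw [pow_one, ← Finset.prod_range_reflect, add_comm 1 n] at h
      rw [h, Fin.prod_univ_eq_prod_range fun i => 1 - q ^ (n - i)]
      congr 1
      refine Finset.prod_congr rfl fun i hi => ?_
      have hin := Finset.mem_range.1 hi
      congr 2
      lia
    have hmid : qPochInf (q ^ (n + 1)) q =
        (∏ i : Fin n, (1 - q ^ ((i : ℕ) + n + 1))) * qPochInf (q ^ (2 * n + 1)) q := by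
      rw [hshift _ n, Fin.prod_univ_eq_prod_range fun i => 1 - q ^ (i + n + 1)]
      ring_nf
    have hlast : qPochInf (q ^ (2 * n + 1)) q =
        (1 - q ^ (2 * n + 1)) * qPochInf (q ^ (2 * n + 2)) q := by
      simpa using hshift (2 * n + 1) 1
    have htail : ∏ i ∈ Finset.range n, qPochInf (q ^ (n + 1 + i)) q =
        (∏ i : Fin n, (1 - q ^ ((i : ℕ) + n + 1))) *
          ∏ i ∈ Finset.range n, qPochInf (q ^ (n + 1 + 1 + i)) q := by
      rw [Fin.prod_univ_eq_prod_range fun i => 1 - q ^ (i + n + 1), ← Finset.prod_mul_distrib]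
      refine Finset.prod_congr rfl fun i _ => ?_
      rw [hshift _ 1, Finset.prod_range_one]
      ring_nf
    rw [pow_succ, ih, prod_prod_Ioi_castSucc_mul_prod_last, Finset.prod_range_succ _ n,
      Finset.prod_range_succ _ n, show n + 1 + 1 + n = 2 * n + 2 by ring, htail, hself, hmid,
      hlast]
    simp only [Fin.val_castSucc, Fin.val_last, Finset.prod_mul_distrib, Finset.prod_pow]
    ring

lemma prod_prod_Ioi_inv_pow_sub_inv_pow (hq : q ≠ 0) (n : ℕ) :
    ∏ i : Fin n, ∏ j ∈ Finset.Ioi i, (q⁻¹ ^ (j : ℕ) - q⁻¹ ^ (i : ℕ)) =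
      (∏ i : Fin n, (q⁻¹ ^ (i : ℕ)) ^ (i : ℕ)) *
        ∏ i : Fin n, ∏ j ∈ Finset.Ioi i, (1 - q ^ ((j : ℕ) - (i : ℕ))) := by
  rw [← prod_prod_Ioi_right fun j : Fin n => q⁻¹ ^ (j : ℕ)]
  simp only [← Finset.prod_mul_distrib]
  refine Finset.prod_congr rfl fun i _ => Finset.prod_congr rfl fun j hj => ?_
  obtain ⟨p, hp⟩ := Nat.exists_eq_add_of_lt (Fin.lt_def.1 (Finset.mem_Ioi.1 hj))
  rw [hp, show (i : ℕ) + p + 1 - i = p + 1 by lia, add_assoc, pow_add, inv_pow, inv_pow]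
  field_simp

lemma multilateralConst_ne_zero (hb : Nonresonant q b) (hc : Nonresonant q c)
    (hd : Nonresonant q d) (hq : q ≠ 0) (hq1 : ‖q‖ < 1) (m : ℕ) :
    multilateralConst m q b c d ≠ 0 := by
  refine mul_ne_zero (Finset.prod_ne_zero_iff.2 fun x _ =>
    div_ne_zero (pow_ne_zero _ hq) (bilateralTerm_ne_zero hb hc hd hq hq1 _))
    (Finset.prod_ne_zero_iff.2 fun i _ => Finset.prod_ne_zero_iff.2 fun j hj => ?_)
  have hij := Fin.lt_def.1 (Finset.mem_Ioi.1 hj)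
  exact inv_ne_zero (mul_ne_zero (pow_ne_zero _ (one_sub_pow_ne_zero hq1 (by lia)))
    (pow_ne_zero _ (one_sub_pow_ne_zero hq1 (by lia))))

lemma prod_div_bilateralTerm_mul_prod (hb : Nonresonant q b) (hc : Nonresonant q c)
    (hd : Nonresonant q d) (hq : q ≠ 0) (hq1 : ‖q‖ < 1) (n : ℕ) :
    (∏ x : Fin n, q ^ (2 * (x : ℕ) * (x : ℕ)) / bilateralTerm q b c d (x : ℕ)) *
      (∏ i : Fin n, (bilateralTerm q b c d (i : ℕ) * (q⁻¹ ^ (i : ℕ)) ^ (i : ℕ))) *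
      (∏ i : Fin n, (q⁻¹ ^ (i : ℕ)) ^ (i : ℕ)) = 1 := by
  simp only [← Finset.prod_mul_distrib]
  refine Finset.prod_eq_one fun x _ => ?_
  have hx := bilateralTerm_ne_zero hb hc hd hq hq1 (x : ℕ)
  rw [← pow_mul, inv_pow, mul_assoc 2, two_mul, pow_add]
  field_simp

lemma prod_inv_sq_mul_prod (hq1 : ‖q‖ < 1) (n : ℕ) :
    (∏ i : Fin n, ∏ j ∈ Finset.Ioi i,
        ((1 - q ^ ((j : ℕ) - (i : ℕ))) ^ 2 * (1 - q ^ ((i : ℕ) + (j : ℕ) + 1)) ^ 2)⁻¹) *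
      (∏ i : Fin n, ∏ j ∈ Finset.Ioi i, (1 - q ^ ((j : ℕ) - (i : ℕ)))) *
      (∏ i : Fin n, ∏ j ∈ Finset.Ioi i,
        ((1 - q ^ ((j : ℕ) - (i : ℕ))) * (1 - q ^ ((i : ℕ) + (j : ℕ) + 1)) ^ 2)) = 1 := by
  simp only [← Finset.prod_mul_distrib]
  refine Finset.prod_eq_one fun i _ => Finset.prod_eq_one fun j hj => ?_
  have hij := Fin.lt_def.1 (Finset.mem_Ioi.1 hj)
  have hdiff := one_sub_pow_ne_zero hq1 (k := j - i) (by lia)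
  have hsum := one_sub_pow_ne_zero hq1 (k := i + j + 1) (by lia)
  field_simp

lemma multilateralConst_mul (hb : Nonresonant q b) (hc : Nonresonant q c)
    (hd : Nonresonant q d) (hq : q ≠ 0) (hq1 : ‖q‖ < 1) (m : ℕ) :
    multilateralConst m q b c d *
        ((∏ i : Fin (m + 1), (bilateralTerm q b c d (i : ℕ) * (q⁻¹ ^ (i : ℕ)) ^ (i : ℕ))) *
          (∏ i : Fin (m + 1), ∏ j ∈ Finset.Ioi i, (q⁻¹ ^ (j : ℕ) - q⁻¹ ^ (i : ℕ))) *
          qPochInf q q ^ (m + 1)) =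
      (∏ i ∈ Finset.range (m + 1), (1 - q ^ (2 * i + 1))) *
        qPochInfVec (m + 1) (q ^ (m + 2) * q ^ m) q := by
  have hterms := prod_div_bilateralTerm_mul_prod hb hc hd hq hq1 (m + 1)
  have hpairs := prod_inv_sq_mul_prod hq1 (m + 1)
  rw [multilateralConst, prod_prod_Ioi_inv_pow_sub_inv_pow hq, qPochInf_self_pow hq1,
    qPochInfVec_mul_pow hq, Fin.prod_univ_eq_prod_range fun i => qPochInf (q ^ (m + 2) * q ^ i) q]
  simp only [← pow_add]
  linear_combination ((∏ i ∈ Finset.range (m + 1), (1 - q ^ (2 * i + 1))) *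
    ∏ i ∈ Finset.range (m + 1), qPochInf (q ^ (m + 2 + i)) q) * (hpairs +
    (∏ i : Fin (m + 1), ∏ j ∈ Finset.Ioi i,
        ((1 - q ^ ((j : ℕ) - (i : ℕ))) ^ 2 * (1 - q ^ ((i : ℕ) + (j : ℕ) + 1)) ^ 2)⁻¹) *
      (∏ i : Fin (m + 1), ∏ j ∈ Finset.Ioi i, (1 - q ^ ((j : ℕ) - (i : ℕ)))) *
      (∏ i : Fin (m + 1), ∏ j ∈ Finset.Ioi i,
        ((1 - q ^ ((j : ℕ) - (i : ℕ))) * (1 - q ^ ((i : ℕ) + (j : ℕ) + 1)) ^ 2)) * hterms)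

lemma qPochInfVec_prod_eq_prod_div (hq : q ≠ 0) (b c d : ℂ) (m : ℕ) :
    qPochInfVec (m + 1) (q ^ 2 / (b * d)) q * qPochInfVec (m + 1) (q ^ 2 / (b * c)) q *
        qPochInfVec (m + 1) (q ^ (m + 2) * q ^ m) q *
        qPochInfVec (m + 1) (q ^ 2 / (c * d)) q /
      (qPochInfVec (m + 1) (q ^ 2 / (b * c * d) * (q ^ m)⁻¹) q *
        qPochInfVec (m + 1) (q ^ 2 / b * q ^ m) q *
        qPochInfVec (m + 1) (q ^ 2 / c * q ^ m) q *
        qPochInfVec (m + 1) (q ^ 2 / d * q ^ m) q) =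
      qPochInfVec (m + 1) (q ^ (m + 2) * q ^ m) q * ∏ i : Fin (m + 1),
        (qPochInf (q ^ 2 / (b * c) * q⁻¹ ^ (i : ℕ)) q *
            qPochInf (q ^ 2 / (b * d) * q⁻¹ ^ (i : ℕ)) q *
            qPochInf (q ^ 2 / (c * d) * q⁻¹ ^ (i : ℕ)) q /
          (qPochInf (q ^ 2 / b * q ^ (i : ℕ)) q * qPochInf (q ^ 2 / c * q ^ (i : ℕ)) q *
            qPochInf (q ^ 2 / d * q ^ (i : ℕ)) q *
            qPochInf (q ^ 2 / (b * c * d) * q⁻¹ ^ (i + m : ℕ)) q)) := by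
  have harg (i : ℕ) : q ^ 2 / (b * c * d) * q⁻¹ ^ (i + m) =
      q ^ 2 / (b * c * d) * (q ^ m)⁻¹ * q⁻¹ ^ i := by
    rw [← inv_pow, pow_add]
    ring
  rw [qPochInfVec_mul_pow hq (q ^ 2 / b), qPochInfVec_mul_pow hq (q ^ 2 / c),
    qPochInfVec_mul_pow hq (q ^ 2 / d), qPochInfVec_eq_prod_inv_pow _ _ (q ^ 2 / (b * c)),
    qPochInfVec_eq_prod_inv_pow _ _ (q ^ 2 / (b * d)),
    qPochInfVec_eq_prod_inv_pow _ _ (q ^ 2 / (c * d)),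
    qPochInfVec_eq_prod_inv_pow _ _ (q ^ 2 / (b * c * d) * (q ^ m)⁻¹)]
  simp only [harg]
  simp only [Finset.prod_mul_distrib, Finset.prod_inv_distrib, div_eq_mul_inv, mul_inv]
  ring

lemma norm_mul_inv_pow_two_mul_lt_one_iff (hq : q ≠ 0) (z : ℂ) (m : ℕ) :
    ‖z * (q ^ (2 * m))⁻¹‖ < 1 ↔ ‖z * (q ^ m)⁻¹‖ < ‖q‖ ^ m := by
  rw [two_mul, pow_add, mul_inv, ← mul_assoc, ← div_eq_mul_inv, norm_div, norm_pow,
    div_lt_one (pow_pos (norm_pos_iff.2 hq) m)]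

lemma prod_Icc_one_sub_pow (q : ℂ) (n : ℕ) :
    ∏ i ∈ Finset.Icc 1 n, (1 - q ^ (1 + 2 * n - 2 * i)) =
      ∏ i ∈ Finset.range n, (1 - q ^ (2 * i + 1)) := by
  rw [← Finset.prod_range_reflect, Finset.range_eq_Ico,
    ← Finset.prod_Ico_add_right_sub_eq 0 n 1, zero_add, Finset.Ico_add_one_right_eq_Icc]
  refine Finset.prod_congr rfl fun i hi => ?_
  have hin := Finset.mem_Icc.1 hi
  congr 2
  lia

lemma Nonresonant.exists_eq_mul_pow (hb : Nonresonant q b) (hq : q ≠ 0) (m : ℕ) :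
    ∃ β, Nonresonant q β ∧ b = β * q ^ m :=
  ⟨b * q⁻¹ ^ m, hb.mul_inv_pow hq m, by rw [inv_pow, inv_mul_cancel_right₀ (pow_ne_zero m hq)]⟩

theorem hasSum_multilateralTerm {n : ℕ} (hn : 0 < n) (hb : Nonresonant q b)
    (hc : Nonresonant q c) (hd : Nonresonant q d) (hq : q ≠ 0) (hq1 : ‖q‖ < 1)
    (h : ‖q ^ (2 * (n : ℤ)) / (b * c * d)‖ < ‖q‖ ^ (n - 1)) :
    HasSum (multilateralTerm n q b c d)
      ((∏ i ∈ Finset.Icc 1 n, (1 - q ^ (1 + 2 * n - 2 * i))) *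
        (qPochInfVec n (q ^ (2 * (n : ℤ)) / (b * d)) q *
          qPochInfVec n (q ^ (2 * (n : ℤ)) / (b * c)) q *
          qPochInfVec n (q ^ (2 * (n : ℤ))) q *
          qPochInfVec n (q ^ (2 * (n : ℤ)) / (c * d)) q /
          (qPochInfVec n (q ^ (2 * (n : ℤ)) / (b * c * d)) q *
            qPochInfVec n (q ^ (2 * (n : ℤ)) / b) q *
            qPochInfVec n (q ^ (2 * (n : ℤ)) / c) q *
            qPochInfVec n (q ^ (2 * (n : ℤ)) / d) q))) := by
  obtain ⟨m, rfl⟩ := Nat.exists_eq_add_one_of_ne_zero hn.ne'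
  obtain ⟨β, hβ, rfl⟩ := hb.exists_eq_mul_pow hq m
  obtain ⟨γ, hγ, rfl⟩ := hc.exists_eq_mul_pow hq m
  obtain ⟨δ, hδ, rfl⟩ := hd.exists_eq_mul_pow hq m
  have hQ : q ^ (2 * ((m + 1 : ℕ) : ℤ)) = q ^ (m + 2) * q ^ m := by
    rw [zpow_two_mul_succ]
    ring
  rw [zpow_two_mul_succ_div_mul_mul hq, Nat.add_sub_cancel,
    ← norm_mul_inv_pow_two_mul_lt_one_iff hq] at h
  have hsum := ((reverseShift (m + 1)).hasSum_iff.2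
    (hasSum_prod_bilateralTerm_mul_vandermonde_eq hβ hγ hδ hq hq1 h)).mul_left
      (multilateralConst m q β γ δ)
  rw [Finset.prod_mul_distrib (f := fun _ => qPochInf q q), Finset.prod_const, Finset.card_univ,
    Fintype.card_fin, ← mul_assoc (_ * _) (_ ^ _), ← mul_assoc (multilateralConst m q β γ δ),
    multilateralConst_mul hβ hγ hδ hq hq1] at hsum
  rw [funext (multilateralTerm_eq hβ hγ hδ hq hq1 m), zpow_two_mul_succ_div_mul_mul hq]
  simp only [zpow_two_mul_succ_div_mul hq, zpow_two_mul_succ_div hq]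
  rw [hQ, prod_Icc_one_sub_pow, qPochInfVec_prod_eq_prod_div hq, ← mul_assoc]
  exact hsum

lemma norm_lt_of_summable_multilateralTerm {n : ℕ} (hn : 0 < n) (hb : Nonresonant q b)
    (hc : Nonresonant q c) (hd : Nonresonant q d) (hq : q ≠ 0) (hq1 : ‖q‖ < 1)
    (hsum : Summable (multilateralTerm n q b c d)) :
    ‖q ^ (2 * (n : ℤ)) / (b * c * d)‖ < ‖q‖ ^ (n - 1) := by
  obtain ⟨m, rfl⟩ := Nat.exists_eq_add_one_of_ne_zero hn.ne'
  obtain ⟨β, hβ, rfl⟩ := hb.exists_eq_mul_pow hq m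
  obtain ⟨γ, hγ, rfl⟩ := hc.exists_eq_mul_pow hq m
  obtain ⟨δ, hδ, rfl⟩ := hd.exists_eq_mul_pow hq m
  rw [funext (multilateralTerm_eq hβ hγ hδ hq hq1 m),
    summable_mul_left_iff (multilateralConst_ne_zero hβ hγ hδ hq hq1 m)] at hsum
  rw [zpow_two_mul_succ_div_mul_mul hq, Nat.add_sub_cancel,
    ← norm_mul_inv_pow_two_mul_lt_one_iff hq]
  exact norm_lt_one_of_summable_prod_bilateralTerm hβ hγ hδ hq hq1
    ((reverseShift (m + 1)).summable_iff.1 hsum)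

end MultilateralTerm

section BaileyParameters

/-- The summand of the multilateral `₃ψ₃` series in Bailey's parameters: the `multilateralTerm`
with `b = q ^ 2n / (a * s)`, `c = x⁻¹` and `d = a * x`, whose argument is `s`. -/
noncomputable def baileyTerm (n : ℕ) (q s a x : ℂ) (μ : Fin n → ℤ) : ℂ :=
  q ^ ((1 - (n : ℤ)) * (∑ i : Fin n, μ i) + 2 * ∑ i : Fin n, ((i : ℕ) : ℤ) * μ i) *
    s ^ (∑ i : Fin n, μ i) *
  (qPochIntVec n (q ^ (2 * (n : ℤ)) / (a * s)) q μ * qPochIntVec n x⁻¹ q μ *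
    qPochIntVec n (a * x) q μ /
    (qPochIntVec n (a * s) q μ * qPochIntVec n (q ^ (2 * (n : ℤ)) * x) q μ *
      qPochIntVec n (q ^ (2 * (n : ℤ)) / (a * x)) q μ)) *
  ∏ i : Fin n, ∏ j ∈ Finset.Ioi i,
    ((1 - q ^ (((j : ℕ) : ℤ) - ((i : ℕ) : ℤ) + μ i - μ j)) *
      (1 - q ^ (2 * (n : ℤ) - 1 - ((i : ℕ) : ℤ) - ((j : ℕ) : ℤ) + μ i + μ j)) /
      ((1 - q ^ (((j : ℕ) : ℤ) - ((i : ℕ) : ℤ))) ^ 2 *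
        (1 - q ^ (2 * (n : ℤ) - 1 - ((i : ℕ) : ℤ) - ((j : ℕ) : ℤ))) ^ 2))

variable {q s a x : ℂ}

lemma zpow_div_eq_argument (hq : q ≠ 0) (ha : a ≠ 0) (hs : s ≠ 0) (hx : x ≠ 0) (k : ℤ) :
    q ^ k / (q ^ k / (a * s) * x⁻¹ * (a * x)) = s := by
  have hQ : q ^ k ≠ 0 := zpow_ne_zero _ hq
  field_simp

lemma baileyTerm_eq (hq : q ≠ 0) (ha : a ≠ 0) (hs : s ≠ 0) (hx : x ≠ 0) (n : ℕ) :
    baileyTerm n q s a x = multilateralTerm n q (q ^ (2 * (n : ℤ)) / (a * s)) x⁻¹ (a * x) := by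
  funext μ
  rw [baileyTerm, multilateralTerm, zpow_div_eq_argument hq ha hs hx,
    div_div_cancel₀ (zpow_ne_zero _ hq), div_inv_eq_mul]

lemma norm_lt_of_summable_baileyTerm {n : ℕ} (hn : 0 < n) (hx : Nonresonant q x)
    (hax : Nonresonant q (a * x)) (has : Nonresonant q (a * s)) (hq : q ≠ 0) (hq1 : ‖q‖ < 1)
    (hsum : Summable (baileyTerm n q s a x)) : ‖s‖ < ‖q‖ ^ (n - 1) := by
  have ha : a ≠ 0 := left_ne_zero_of_mul hax.1
  have hs : s ≠ 0 := right_ne_zero_of_mul has.1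
  rw [baileyTerm_eq hq ha hs hx.1] at hsum
  simpa only [zpow_div_eq_argument hq ha hs hx.1] using
    norm_lt_of_summable_multilateralTerm hn (has.zpow_div hq _) hx.inv hax hq hq1 hsum

theorem multilateral_3psi3_delta_one_general {n : ℕ} (hn : 0 < n) (hx : Nonresonant q x)
    (hax : Nonresonant q (a * x)) (has : Nonresonant q (a * s)) (hq : q ≠ 0) (hq1 : ‖q‖ < 1)
    (hconv : ‖s‖ < ‖q‖ ^ (n - 1)) :
    HasSum (baileyTerm n q s a x)
      ((∏ i ∈ Finset.Icc 1 n, (1 - q ^ (1 + 2 * n - 2 * i))) *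
        (qPochInfVec n (s * x⁻¹) q * qPochInfVec n (a * s * x) q *
          qPochInfVec n (q ^ (2 * (n : ℤ))) q *
          qPochInfVec n (q ^ (2 * (n : ℤ)) / a) q /
          (qPochInfVec n s q * qPochInfVec n (a * s) q *
            qPochInfVec n (q ^ (2 * (n : ℤ)) * x) q *
            qPochInfVec n (q ^ (2 * (n : ℤ)) / (a * x)) q))) := by
  have ha : a ≠ 0 := left_ne_zero_of_mul hax.1
  have hs : s ≠ 0 := right_ne_zero_of_mul has.1
  have hx0 : x ≠ 0 := hx.1
  have hQ : q ^ (2 * (n : ℤ)) ≠ 0 := zpow_ne_zero _ hq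
  have harg := zpow_div_eq_argument hq ha hs hx0 (2 * n)
  have hbd : q ^ (2 * (n : ℤ)) / (q ^ (2 * (n : ℤ)) / (a * s) * (a * x)) = s * x⁻¹ := by
    field_simp
  have hbc : q ^ (2 * (n : ℤ)) / (q ^ (2 * (n : ℤ)) / (a * s) * x⁻¹) = a * s * x := by
    field_simp
  have hcd : x⁻¹ * (a * x) = a := by
    field_simp
  have hsum := hasSum_multilateralTerm hn (has.zpow_div hq (2 * n)) hx.inv hax hq hq1
    (harg.symm ▸ hconv)
  rwa [← baileyTerm_eq hq ha hs hx0, harg, hbd, hbc, hcd, div_div_cancel₀ hQ,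
    div_inv_eq_mul] at hsum

end BaileyParameters

/-- the multilateral analogue of Bailey's `₃ψ₃` summation (`δ = 1` case). -/
theorem multilateral_3psi3_delta_one (n : ℕ) (hn : 0 < n) (q s a x : ℂ)
    (hq0 : 0 < ‖q‖) (hq1 : ‖q‖ < 1)
    (ha0 : a ≠ 0) (hx0 : x ≠ 0) (hs0 : s ≠ 0)
    (h : ∀ m : ℤ, s ≠ q ^ m ∧ a * s ≠ q ^ m ∧ x ≠ q ^ m ∧ a * x ≠ q ^ m ∧
      s * x⁻¹ ≠ q ^ m ∧ a * s * x ≠ q ^ m)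
    (F : (Fin n → ℤ) → ℂ)
    (hF : ∀ μ : Fin n → ℤ, F μ =
      q ^ ((1 - (n : ℤ)) * (∑ i : Fin n, μ i) + 2 * ∑ i : Fin n, ((i : ℕ) : ℤ) * μ i) * s ^ (∑ i : Fin n, μ i) *
      (qPochIntVec n (q ^ (2 * (n : ℤ)) / (a * s)) q μ * qPochIntVec n x⁻¹ q μ *
        qPochIntVec n (a * x) q μ /
        (qPochIntVec n (a * s) q μ * qPochIntVec n (q ^ (2 * (n : ℤ)) * x) q μ *
          qPochIntVec n (q ^ (2 * (n : ℤ)) / (a * x)) q μ)) *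
      ∏ i : Fin n, ∏ j ∈ Finset.Ioi i,
        ((1 - q ^ (((j : ℕ) : ℤ) - ((i : ℕ) : ℤ) + μ i - μ j)) *
          (1 - q ^ (2 * (n : ℤ) - 1 - ((i : ℕ) : ℤ) - ((j : ℕ) : ℤ) + μ i + μ j)) /
          ((1 - q ^ (((j : ℕ) : ℤ) - ((i : ℕ) : ℤ))) ^ 2 *
            (1 - q ^ (2 * (n : ℤ) - 1 - ((i : ℕ) : ℤ) - ((j : ℕ) : ℤ))) ^ 2)))
    (hsum : Summable F) :
    (∏ i ∈ Finset.Icc 1 n, (1 - q ^ (1 + 2 * n - 2 * i))) *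
      (qPochInfVec n (s * x⁻¹) q * qPochInfVec n (a * s * x) q *
        qPochInfVec n (q ^ (2 * (n : ℤ))) q *
        qPochInfVec n (q ^ (2 * (n : ℤ)) / a) q /
        (qPochInfVec n s q * qPochInfVec n (a * s) q *
          qPochInfVec n (q ^ (2 * (n : ℤ)) * x) q *
          qPochInfVec n (q ^ (2 * (n : ℤ)) / (a * x)) q))
    = ∑' μ : Fin n → ℤ, F μ := by
  have hq : q ≠ 0 := norm_pos_iff.1 hq0
  have hx : Nonresonant q x := ⟨hx0, fun k => (h k).2.2.1⟩
  have hax : Nonresonant q (a * x) := ⟨mul_ne_zero ha0 hx0, fun k => (h k).2.2.2.1⟩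
  have has : Nonresonant q (a * s) := ⟨mul_ne_zero ha0 hs0, fun k => (h k).2.1⟩
  obtain rfl : F = baileyTerm n q s a x := funext hF
  have hs := norm_lt_of_summable_baileyTerm hn hx hax has hq hq1 hsum
  exact (multilateral_3psi3_delta_one_general hn hx hax has hq hq1 hs).tsum_eq.symm
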